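/- There exist a constant c > 0 and a threshold d₀ ∈ ℕ such that for every dimension d ≥ d₀, every M ≥ 1, and every M-bit memory-constrained deterministic algorithm that, using T queries, is guaranteed to solve the feasibility problem over the unit ball of ℝ^d with accuracy ε = 1/(48 d² √d), one has T ≥ c · d³ / ((M + log d) · (log d)³). -/

import Mathlib

open scoped RealInnerProductSpace

/-- An `M`-bit memory-constrained deterministic algorithm interacting with an oracle
with query space `S` and response space `R`: a query function and an update function. -/
structure MemAlg (M : ℕ) (S R : Type) where
  query : (Fin M → Bool) → S
  update : (Fin M → Bool) → S → R → (Fin M → Bool)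

namespace MemAlg

variable {M : ℕ} {S R : Type}

/-- The memory state after `t` iterations, interacting with the oracle `O`;
the initial memory state is `0^M`. -/
def mem (alg : MemAlg M S R) (O : S → R) : ℕ → (Fin M → Bool)
  | 0 => fun _ => false
  | t + 1 =>
      alg.update (alg.mem O t) (alg.query (alg.mem O t)) (O (alg.query (alg.mem O t)))

/-- The output of the algorithm after `T` queries: its last query
`q_T = ψ_query (Memory_{T-1})`. -/
def output (alg : MemAlg M S R) (O : S → R) (T : ℕ) : S :=
  alg.query (alg.mem O (T - 1))

end MemAlg

/-- `O` is a separation oracle for the set `Q`: for each query `x` it either returns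
`none` (the symbol `Success`), which is only allowed when `x ∈ Q`, or a vector `g`
separating `x` from `Q`, i.e. `⟪g, x - x'⟫ > 0` for all `x' ∈ Q`. -/
def IsSeparationOracle {d : ℕ} (Q : Set (EuclideanSpace ℝ (Fin d)))
    (O : EuclideanSpace ℝ (Fin d) → Option (EuclideanSpace ℝ (Fin d))) : Prop :=
  ∀ x, (O x = none → x ∈ Q) ∧
    ∀ g, O x = some g → ∀ x' ∈ Q, 0 < ⟪g, x - x'⟫

/-- The algorithm `alg`, using `T` queries, is guaranteed to solve the feasibility problem
over the unit ball of `ℝ^d` with accuracy `ε`: for every convex set `Q ⊆ B_d(0,1)`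
containing a ball of radius `ε` centered at some point of the unit ball, and every
separation oracle for `Q`, the output lies in `Q`. -/
def SolvesFeasibility {M : ℕ} (d : ℕ)
    (alg : MemAlg M (EuclideanSpace ℝ (Fin d)) (Option (EuclideanSpace ℝ (Fin d))))
    (T : ℕ) (ε : ℝ) : Prop :=
  ∀ Q : Set (EuclideanSpace ℝ (Fin d)),
    Convex ℝ Q → Q ⊆ Metric.closedBall (0 : EuclideanSpace ℝ (Fin d)) 1 →
    (∃ xstar ∈ Metric.closedBall (0 : EuclideanSpace ℝ (Fin d)) 1,
        Metric.closedBall xstar ε ⊆ Q) →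
    ∀ O : EuclideanSpace ℝ (Fin d) → Option (EuclideanSpace ℝ (Fin d)),
      IsSeparationOracle Q O → alg.output O T ∈ Q

/-!
The unknown set is cut out of the unit ball by `n` row constraints `|⟪a i, x⟫| ≤ η`, with the rows
on a fine grid, and by "walls" that the oracle chooses adversarially: each new wall is nearly
orthogonal to all answers (queries meeting every constraint so far) already given in its block, so
that each wall forces a new answer. If `T ≤ P * m`, one of the `P` blocks of `k` walls takes at most
`m` queries, which reveal at most `m` rows. The memory at the start of that block, the walls, the
revealed rows and the times of the `k` answers determine these answers. All `n - m` other rows are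
nearly orthogonal to the answers, while the walls pair with the answers in a triangular way; hence
shifting these rows by subset sums of walls gives distinct matrices, and up to lower order factors a
description fits at most a fraction `2 ^ (-k * (n - m))` of all matrices. Every matrix has a
description, so `k * (n - m)` is at most of order `M + P * k ^ 2 * log d + n`. With `n = d / 2`,
`m = n / 4` and `k` of order `M / d ≥ 1` (as a packing of balls shows), this is false while `P` is
below the order of `d / (k * log d)`, so `T` is at least of order `d ^ 3 / (M * log d)`.
-/

namespace MemAlg

variable {M : ℕ} {S R : Type}

/-- One iteration of the algorithm, as a map on memory states. -/
def step (alg : MemAlg M S R) (O : S → R) (μ : Fin M → Bool) : Fin M → Bool :=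
  alg.update μ (alg.query μ) (O (alg.query μ))

/-- The query made after `t` iterations by the algorithm started from the memory state `μ`
instead of `0^M`; this is how a block of the run is replayed. -/
def queryFrom (alg : MemAlg M S R) (O : S → R) (μ : Fin M → Bool) (t : ℕ) : S :=
  alg.query ((alg.step O)^[t] μ)

/-- The query made after `t` iterations, so that the output after `T` queries is the one at
`T - 1`. -/
def queryAt (alg : MemAlg M S R) (O : S → R) (t : ℕ) : S :=
  alg.query (alg.mem O t)

variable {alg : MemAlg M S R} {O O' : S → R}

theorem mem_add (s t : ℕ) : alg.mem O (s + t) = (alg.step O)^[t] (alg.mem O s) := by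
  induction t with
  | zero => rfl
  | succ t ih => rw [Function.iterate_succ_apply', ← ih]; rfl

theorem queryAt_add (s t : ℕ) : alg.queryAt O (s + t) = alg.queryFrom O (alg.mem O s) t := by
  rw [queryAt, queryFrom, mem_add]

theorem queryFrom_congr {μ : Fin M → Bool} {t : ℕ}
    (h : ∀ s < t, O (alg.queryFrom O μ s) = O' (alg.queryFrom O μ s)) :
    alg.queryFrom O μ t = alg.queryFrom O' μ t := by
  suffices hiter : (alg.step O)^[t] μ = (alg.step O')^[t] μ from congrArg alg.query hiter
  induction t with
  | zero => rfl
  | succ t ih =>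
    have hresp := h t t.lt_succ_self
    rw [Function.iterate_succ_apply', Function.iterate_succ_apply',
      ← ih fun s hs => h s (hs.trans t.lt_succ_self), step, step]
    exact congrArg (alg.update _ _) hresp

theorem queryAt_congr {t : ℕ} (h : ∀ s < t, O (alg.queryAt O s) = O' (alg.queryAt O s)) :
    alg.queryAt O t = alg.queryAt O' t := by
  have key (O : S → R) (s : ℕ) : alg.queryAt O s = alg.queryFrom O (fun _ => false) s := by
    simpa only [zero_add, mem] using alg.queryAt_add (O := O) 0 s
  simp only [key O] at h
  rw [key, key, queryFrom_congr h]

end MemAlg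

/-- The separation oracle of the ball `closedBall c ε` that separates along the radius. -/
noncomputable def ballOracle {d : ℕ} (c : EuclideanSpace ℝ (Fin d)) (ε : ℝ)
    (x : EuclideanSpace ℝ (Fin d)) : Option (EuclideanSpace ℝ (Fin d)) :=
  open scoped Classical in if x ∈ Metric.closedBall c ε then none else some (x - c)

theorem isSeparationOracle_ballOracle {d : ℕ} (c : EuclideanSpace ℝ (Fin d)) (ε : ℝ) :
    IsSeparationOracle (Metric.closedBall c ε) (ballOracle c ε) := by
  intro x
  unfold ballOracle
  split_ifs with hx
  · exact ⟨fun _ => hx, fun _ h => by simp at h⟩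
  · refine ⟨fun h => by simp at h, fun g hg y hy => ?_⟩
    obtain rfl := Option.some.inj hg
    rw [Metric.mem_closedBall, dist_eq_norm] at hx hy
    have hsplit : ⟪x - c, x - y⟫ = ‖x - c‖ ^ 2 - ⟪x - c, y - c⟫ := by
      rw [← real_inner_self_eq_norm_sq, ← inner_sub_right, sub_sub_sub_cancel_right]
    have hcauchy := real_inner_le_norm (x - c) (y - c)
    nlinarith [norm_nonneg (y - c)]

/-- Disjoint balls force distinct final memory states. -/
theorem SolvesFeasibility.card_le_two_pow {d M T : ℕ} {ε : ℝ}
    {alg : MemAlg M (EuclideanSpace ℝ (Fin d)) (Option (EuclideanSpace ℝ (Fin d)))}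
    (hsol : SolvesFeasibility d alg T ε) {ι : Type*} [Fintype ι]
    {c : ι → EuclideanSpace ℝ (Fin d)} (hc : ∀ i, ‖c i‖ ≤ 1)
    (hball : ∀ i, Metric.closedBall (c i) ε ⊆ Metric.closedBall 0 1)
    (hdist : Pairwise fun i j => 2 * ε < dist (c i) (c j)) : Fintype.card ι ≤ 2 ^ M := by
  have hout (i : ι) : alg.output (ballOracle (c i) ε) T ∈ Metric.closedBall (c i) ε :=
    hsol _ (convex_closedBall _ _) (hball i) ⟨c i, mem_closedBall_zero_iff.2 (hc i), subset_rfl⟩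
      _ (isSeparationOracle_ballOracle _ _)
  have hinj : Function.Injective fun i => alg.mem (ballOracle (c i) ε) (T - 1) := by
    intro i j hij
    by_contra hne
    have hj := hout j
    have hout_eq : alg.output (ballOracle (c i) ε) T = alg.output (ballOracle (c j) ε) T :=
      congrArg alg.query hij
    rw [← hout_eq] at hj
    have := dist_triangle_left (c i) (c j) (alg.output (ballOracle (c i) ε) T)
    linarith [hdist hne, Metric.mem_closedBall.1 (hout i), Metric.mem_closedBall.1 hj]
  simpa using Fintype.card_le_of_injective _ hinj

/-- The vertices of a cube of side `1 / (2 √d)` with one corner at the origin. -/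
noncomputable def cubeVertex (d : ℕ) (s : Finset (Fin d)) : EuclideanSpace ℝ (Fin d) :=
  WithLp.toLp 2 fun i => if i ∈ s then 1 / (2 * √d) else 0

theorem norm_cubeVertex_le (d : ℕ) (s : Finset (Fin d)) : ‖cubeVertex d s‖ ≤ 1 / 2 := by
  refine abs_le_of_sq_le_sq' ?_ (by norm_num) |>.2
  have hsummand (i : Fin d) : cubeVertex d s i ^ 2 ≤ 1 / (4 * d) := by
    change (if i ∈ s then 1 / (2 * √(d : ℝ)) else 0) ^ 2 ≤ _
    split_ifs
    · rw [div_pow, mul_pow, Real.sq_sqrt d.cast_nonneg]; norm_num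
    · rw [zero_pow two_ne_zero]; positivity
  calc ‖cubeVertex d s‖ ^ 2 = ∑ i, cubeVertex d s i ^ 2 := EuclideanSpace.real_norm_sq_eq _
    _ ≤ d * (1 / (4 * d)) := by
      simpa using Finset.sum_le_card_nsmul Finset.univ _ _ fun i _ => hsummand i
    _ ≤ (1 / 2) ^ 2 := by
      rcases d.eq_zero_or_pos with rfl | hd
      · norm_num
      · have : (0 : ℝ) < d := by exact_mod_cast hd
        field_simp
        norm_num

theorem le_dist_cubeVertex (d : ℕ) {s t : Finset (Fin d)} (hst : s ≠ t) :
    1 / (2 * √d) ≤ dist (cubeVertex d s) (cubeVertex d t) := by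
  obtain ⟨i, hi⟩ : ∃ i, ¬ (i ∈ s ↔ i ∈ t) := by
    by_contra! h
    exact hst (Finset.ext h)
  have hcoord : |cubeVertex d s i - cubeVertex d t i| = 1 / (2 * √d) := by
    change |(if i ∈ s then 1 / (2 * √(d : ℝ)) else 0) - (if i ∈ t then 1 / (2 * √(d : ℝ)) else 0)|
      = _
    have habs : |1 / (2 * √(d : ℝ))| = 1 / (2 * √d) := abs_of_nonneg (by positivity)
    by_cases his : i ∈ s <;> by_cases hit : i ∈ t <;>
      simp only [his, hit, not_true_eq_false] at hi <;>
      simp only [his, hit, if_true, if_false, sub_zero, zero_sub, abs_neg, habs]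
  rw [dist_eq_norm, ← hcoord]
  exact PiLp.norm_apply_le (cubeVertex d s - cubeVertex d t) i

theorem SolvesFeasibility.dim_le_memory {d M T : ℕ} {ε : ℝ}
    {alg : MemAlg M (EuclideanSpace ℝ (Fin d)) (Option (EuclideanSpace ℝ (Fin d)))}
    (hsol : SolvesFeasibility d alg T ε) (hε : ε ≤ 1 / 2) (hd : 2 * ε < 1 / (2 * √d)) :
    d ≤ M := by
  have hcard : Fintype.card (Finset (Fin d)) ≤ 2 ^ M := by
    refine hsol.card_le_two_pow (c := cubeVertex d) (fun s => ?_) (fun s => ?_) fun s t hst => ?_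
    · linarith [norm_cubeVertex_le d s]
    · refine Metric.closedBall_subset_closedBall' ?_
      rw [dist_zero_right]
      linarith [norm_cubeVertex_le d s]
    · exact hd.trans_le (le_dist_cubeVertex d hst)
  rw [Fintype.card_finset, Fintype.card_fin] at hcard
  exact (Nat.pow_le_pow_iff_right one_lt_two).1 hcard

theorem exists_norm_image_eq_one_forall_inner_eq_zero {V E ι : Type*} [AddCommGroup V]
    [Module ℝ V] [NormedAddCommGroup E] [InnerProductSpace ℝ E] [Fintype ι] {g : V →ₗ[ℝ] E}
    (hg : Function.Injective g) (f : ι → E) (hcard : Fintype.card ι < Module.finrank ℝ V) :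
    ∃ c, ‖g c‖ = 1 ∧ ∀ i, ⟪f i, g c⟫ = 0 := by
  have : FiniteDimensional ℝ V := Module.finite_of_finrank_pos (Nat.zero_lt_of_lt hcard)
  let φ : V →ₗ[ℝ] ι → ℝ := LinearMap.pi fun i => innerₛₗ ℝ (f i) ∘ₗ g
  have hker : LinearMap.ker φ ≠ ⊥ := LinearMap.ker_ne_bot_of_finrank_lt (by simpa using hcard)
  obtain ⟨c, hc, hc0⟩ := Submodule.exists_mem_ne_zero_of_ne_bot hker
  have hgc : g c ≠ 0 := (map_ne_zero_iff g hg).2 hc0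
  have horth (i : ι) : ⟪f i, g c⟫ = 0 := congrFun (LinearMap.mem_ker.1 hc) i
  refine ⟨‖g c‖⁻¹ • c, ?_, fun i => ?_⟩
  · rw [map_smul, norm_smul, norm_inv, norm_norm, inv_mul_cancel₀ (norm_ne_zero_iff.2 hgc)]
  · rw [map_smul, real_inner_smul_right, horth, mul_zero]

/-- Dependent choice for a relation between a finite history and the next term. -/
theorem exists_seq_forall_of_forall_exists {α : Type*} [Nonempty α]
    {R : ℕ → (ℕ → α) → α → Prop}
    (hcongr : ∀ {n f g a}, (∀ i < n, f i = g i) → R n f a → R n g a)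
    (hex : ∀ n f, ∃ a, R n f a) : ∃ v : ℕ → α, ∀ n, R n v (v n) := by
  choose next hnext using hex
  let F (n : ℕ) : ℕ → α :=
    n.rec (fun _ => Classical.arbitrary α) fun m f => Function.update f m (next m f)
  have hF (m : ℕ) : F (m + 1) = Function.update (F m) m (next m (F m)) := rfl
  have hstable {i n : ℕ} (h : i < n) : F n i = F (i + 1) i := by
    induction n, h using Nat.le_induction with
    | base => rfl
    | succ n hn ih => rw [hF, Function.update_of_ne (by lia), ih]
  have hself (n : ℕ) : F (n + 1) n = next n (F n) := by rw [hF, Function.update_self]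
  refine ⟨fun n => F (n + 1) n, fun n => hcongr (fun i hi => hstable hi) ?_⟩
  simpa only [hself] using hnext n (F n)

section Shifts

variable {k : ℕ} {ι W : Type*} [Fintype ι] [Fintype W]

theorem eq_zero_of_triangular {e : Fin k → ℤ} {y : Fin k → Fin k → ℝ} {θ δ ρ : ℝ}
    (he : ∀ l, |e l| ≤ 1) (hdiag : ∀ l, θ ≤ |y l l|) (hupper : ∀ l l', l < l' → |y l l'| ≤ δ)
    (hsum : ∀ l, |∑ l', e l' * y l l'| ≤ ρ) (hδ : 0 ≤ δ) (hlt : ρ + k * δ < θ) : e = 0 := by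
  funext l
  induction l using WellFoundedLT.induction with | ind l ih => ?_
  have hrest : |∑ l' ∈ Finset.univ.erase l, e l' * y l l'| ≤ k * δ := by
    calc |∑ l' ∈ Finset.univ.erase l, e l' * y l l'|
        ≤ ∑ l' ∈ Finset.univ.erase l, |e l' * y l l'| := Finset.abs_sum_le_sum_abs _ _
      _ ≤ ∑ _ ∈ Finset.univ.erase l, δ := Finset.sum_le_sum fun l' hl' => ?_
      _ ≤ ∑ _ : Fin k, δ :=
        Finset.sum_le_sum_of_subset_of_nonneg (Finset.erase_subset _ _) fun _ _ _ => hδ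
      _ = k * δ := by simp
    rcases (Finset.ne_of_mem_erase hl').lt_or_gt with h | h
    · simpa [ih l' h] using hδ
    · have habs : |(e l' : ℝ)| ≤ 1 := by exact_mod_cast he l'
      rw [abs_mul]
      exact (mul_le_of_le_one_left (abs_nonneg _) habs).trans (hupper l l' h)
  have hsplit := Finset.add_sum_erase Finset.univ (fun l' => (e l' : ℝ) * y l l')
    (Finset.mem_univ l)
  have hentry : |(e l : ℝ)| * |y l l| < θ := by
    rw [← abs_mul, eq_sub_of_add_eq hsplit]
    linarith [abs_sub (∑ l', (e l' : ℝ) * y l l') (∑ l' ∈ Finset.univ.erase l, e l' * y l l'),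
      hsum l]
  by_contra hne
  have hone : (1 : ℝ) ≤ |(e l : ℝ)| := by exact_mod_cast Int.one_le_abs hne
  linarith [hdiag l, le_mul_of_one_le_left (abs_nonneg (y l l)) hone]

variable {N B : ℕ} {Z : Fin k → W → ℤ} {θ δ ρ : ℝ}

theorem subset_eq_of_shift_eq {r r' : W → ℤ} {c c' : Fin k → Fin 2} {u : Fin k → W → ℝ}
    {o : Fin k → ℝ} (hr : ∀ l, |∑ q, r q * u l q + o l| ≤ ρ)
    (hr' : ∀ l, |∑ q, r' q * u l q + o l| ≤ ρ) (hdiag : ∀ l, θ ≤ |∑ q, Z l q * u l q|)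
    (hupper : ∀ l l', l < l' → |∑ q, Z l' q * u l q| ≤ δ) (hδ : 0 ≤ δ)
    (hlt : 2 * ρ + k * δ < θ)
    (hshift : ∀ q, r q + ∑ l, (c l : ℤ) * Z l q = r' q + ∑ l, (c' l : ℤ) * Z l q) : c = c' := by
  have hdiff (l : Fin k) : ∑ l', ((c' l' - c l' : ℤ) : ℝ) * ∑ q, Z l' q * u l q =
      (∑ q, r q * u l q + o l) - (∑ q, r' q * u l q + o l) := by
    rw [add_sub_add_right_eq_sub, ← Finset.sum_sub_distrib]
    simp only [Finset.mul_sum]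
    rw [Finset.sum_comm]
    refine Finset.sum_congr rfl fun q _ => ?_
    have hq : ∑ l', (c' l' - c l' : ℤ) * Z l' q = r q - r' q := by
      simp only [sub_mul, Finset.sum_sub_distrib]
      linarith [hshift q]
    rw [← sub_mul, ← Int.cast_sub, ← hq, Int.cast_sum, Finset.sum_mul]
    exact Finset.sum_congr rfl fun l' _ => by push_cast; ring
  have hzero : (fun l => (c' l - c l : ℤ)) = 0 := by
    refine eq_zero_of_triangular (fun l => abs_le.2 ?_) hdiag hupper (fun l => ?_) hδ hlt
    · omega
    · rw [hdiff]
      linarith [abs_sub (∑ q, r q * u l q + o l) (∑ q, r' q * u l q + o l), hr l, hr' l]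
  funext l
  have := congrFun hzero l
  simp only [Pi.zero_apply] at this
  omega

theorem abs_subsetSum_le {z : Fin k → ℤ} (hz : ∀ l, |z l| ≤ B) (c : Fin k → Fin 2) :
    |∑ l, (c l : ℤ) * z l| ≤ k * B := by
  have hterm (l : Fin k) : |(c l : ℤ) * z l| ≤ B := by
    have hc : |(c l : ℤ)| ≤ 1 := abs_le.2 (by omega)
    rw [abs_mul]
    exact (mul_le_of_le_one_left (abs_nonneg _) hc).trans (hz l)
  refine (Finset.abs_sum_le_sum_abs _ _).trans ?_
  simpa using Finset.sum_le_card_nsmul Finset.univ _ _ fun l _ => hterm l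

theorem card_piFinset_ite_singleton [DecidableEq ι] {β : Type*} [Fintype β] (I : Finset ι)
    (b : β) : (Fintype.piFinset fun i => if i ∈ I then {b} else Finset.univ).card =
      Fintype.card β ^ (Fintype.card ι - I.card) := by
  rw [Fintype.card_piFinset, ← Finset.card_compl, ← Finset.prod_const,
    ← Finset.prod_subset (Finset.subset_univ Iᶜ)]
  · exact Finset.prod_congr rfl fun i hi => by simp [Finset.mem_compl.1 hi]
  · exact fun i _ hi => by simp [Finset.notMem_compl.1 hi]

/-- The rows `A i`, each shifted by the sum of those `Z l` that are selected by `c i`. -/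
def shiftRows (Z : Fin k → W → ℤ) : (ι → W → ℤ) × (ι → Fin k → Fin 2) → ι → W → ℤ :=
  fun (A, c) i q => A i q + ∑ l, (c i l : ℤ) * Z l q

variable {X : Type*} {S : Finset (ι → W → ℤ)} {I : Finset ι} {w : (ι → W → ℤ) → Fin k → X}
  {p : X → W → ℝ} {o : X → ι → ℝ}

omit [Fintype ι] in
/-- The points `w A` depend only on the rows in `I`, which are not shifted, and pairing a shift
with these points recovers it, by triangularity. -/
theorem injOn_shiftRows_of_triangular (hw : DependsOn w (I : Set ι))
    (hrow : ∀ A ∈ S, ∀ l, ∀ i ∉ I, |∑ q, A i q * p (w A l) q + o (w A l) i| ≤ ρ)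
    (hdiag : ∀ A ∈ S, ∀ l, θ ≤ |∑ q, Z l q * p (w A l) q|)
    (hupper : ∀ A ∈ S, ∀ l l', l < l' → |∑ q, Z l' q * p (w A l) q| ≤ δ)
    (hδ : 0 ≤ δ) (hlt : 2 * ρ + k * δ < θ) :
    Set.InjOn (shiftRows Z) {a | a.1 ∈ S ∧ ∀ i ∈ I, a.2 i = 0} := by
  rintro ⟨A, c⟩ ⟨hA, hc⟩ ⟨A', c'⟩ ⟨hA', hc'⟩ heq
  have hzero {i : ι} (hi : i ∈ I) : c i = c' i := (hc i hi).trans (hc' i hi).symm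
  have hrows {i : ι} (hi : c i = c' i) : A i = A' i := by
    funext q
    have := congrFun (congrFun heq i) q
    simpa [shiftRows, hi] using this
  have hpts : w A = w A' := hw fun i hi => hrows (hzero hi)
  have hcoef : c = c' := by
    funext i
    by_cases hi : i ∈ I
    · exact hzero hi
    · exact subset_eq_of_shift_eq (fun l => hrow A hA l i hi)
        (fun l => hpts ▸ hrow A' hA' l i hi) (hdiag A hA) (hupper A hA) hδ hlt
        fun q => congrFun (congrFun heq i) q
  exact Prod.ext (funext fun i => hrows (congrFun hcoef i)) hcoef

theorem card_mul_two_pow_le_of_triangular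
    (hN : ∀ A ∈ S, ∀ i q, 0 ≤ A i q ∧ A i q < N) (hB : ∀ l q, |Z l q| ≤ B)
    (hw : DependsOn w (I : Set ι))
    (hrow : ∀ A ∈ S, ∀ l, ∀ i ∉ I, |∑ q, A i q * p (w A l) q + o (w A l) i| ≤ ρ)
    (hdiag : ∀ A ∈ S, ∀ l, θ ≤ |∑ q, Z l q * p (w A l) q|)
    (hupper : ∀ A ∈ S, ∀ l l', l < l' → |∑ q, Z l' q * p (w A l) q| ≤ δ)
    (hδ : 0 ≤ δ) (hlt : 2 * ρ + k * δ < θ) :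
    S.card * (2 ^ k) ^ (Fintype.card ι - I.card) ≤
      ((N + 2 * (k * B)) ^ Fintype.card W) ^ Fintype.card ι := by
  classical
  let C : Finset (ι → Fin k → Fin 2) := Fintype.piFinset fun i => if i ∈ I then {0} else Finset.univ
  let box : Finset (ι → W → ℤ) :=
    Fintype.piFinset fun _ => Fintype.piFinset fun _ => Finset.Ico (-(k * B)) (N + k * B)
  have hcardC : C.card = (2 ^ k) ^ (Fintype.card ι - I.card) := by
    rw [card_piFinset_ite_singleton, Fintype.card_fun, Fintype.card_fin, Fintype.card_fin]
  have hcardbox : box.card = ((N + 2 * (k * B)) ^ Fintype.card W) ^ Fintype.card ι := by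
    simp only [box, Fintype.card_piFinset, Finset.prod_const, Finset.card_univ, Int.card_Ico]
    congr 3
    lia
  have hmaps : ∀ a ∈ S ×ˢ C, shiftRows Z a ∈ box := by
    intro a ha
    simp only [box, Fintype.mem_piFinset, Finset.mem_Ico]
    intro i q
    have := hN a.1 (Finset.mem_product.1 ha).1 i q
    have := abs_le.1 (abs_subsetSum_le (fun l => hB l q) (a.2 i))
    constructor <;> simp only [shiftRows] <;> lia
  have hsub : ((S ×ˢ C : Finset _) : Set _) ⊆
      {a : (ι → W → ℤ) × (ι → Fin k → Fin 2) | a.1 ∈ S ∧ ∀ i ∈ I, a.2 i = 0} := by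
    intro a ha
    obtain ⟨hA, hc⟩ := Finset.mem_product.1 ha
    refine ⟨hA, fun i hi => ?_⟩
    simpa only [hi, if_true, Finset.mem_singleton] using Fintype.mem_piFinset.1 hc i
  rw [← hcardC, ← hcardbox, ← Finset.card_product]
  exact Finset.card_le_card_of_injOn _ hmaps <|
    (injOn_shiftRows_of_triangular hw hrow hdiag hupper hδ hlt).mono hsub

end Shifts

section CutOracle

variable {E : Type*} [NormedAddCommGroup E] [InnerProductSpace ℝ E] {n : ℕ} {η θ : ℝ}
  {a : Fin n → E} {L L' : List E} {x : E}

/-- The points of the unit ball that are almost orthogonal (up to `η`) to every row `a i` and lie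
deep (at depth `θ`) behind every wall `z ∈ L`. -/
def cutRegion (η θ : ℝ) (a : Fin n → E) (L : List E) : Set E :=
  {x | ‖x‖ ≤ 1 ∧ (∀ i, |⟪a i, x⟫| ≤ η) ∧ ∀ z ∈ L, ⟪z, x⟫ ≤ -θ}

theorem norm_le_one_of_mem_cutRegion (hx : x ∈ cutRegion η θ a L) : ‖x‖ ≤ 1 := hx.1

theorem abs_inner_le_of_mem_cutRegion (hx : x ∈ cutRegion η θ a L) (i : Fin n) :
    |⟪a i, x⟫| ≤ η := hx.2.1 i

theorem inner_le_neg_of_mem_cutRegion (hx : x ∈ cutRegion η θ a L) {z : E} (hz : z ∈ L) :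
    ⟪z, x⟫ ≤ -θ := hx.2.2 z hz

theorem cutRegion_anti (h : L ⊆ L') : cutRegion η θ a L' ⊆ cutRegion η θ a L :=
  fun _ hx => ⟨hx.1, hx.2.1, fun z hz => hx.2.2 z (h hz)⟩

theorem convex_cutRegion : Convex ℝ (cutRegion η θ a L) := by
  have hinter : cutRegion η θ a L = Metric.closedBall 0 1 ∩
      ((⋂ i, innerₛₗ ℝ (a i) ⁻¹' Set.Icc (-η) η) ∩ ⋂ z ∈ L, innerₛₗ ℝ z ⁻¹' Set.Iic (-θ)) := by
    ext x
    simp [cutRegion, abs_le]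
  rw [hinter]
  exact (convex_closedBall _ _).inter <|
    (convex_iInter fun _ => (convex_Icc _ _).linear_preimage _).inter <|
      convex_iInter₂ fun _ _ => (convex_Iic _).linear_preimage _

/-- The first row that `x` is not almost orthogonal to. -/
noncomputable def firstViolated (η : ℝ) (a : Fin n → E) (x : E) : Option (Fin n) :=
  open scoped Classical in Fin.find? fun i => η < |⟪a i, x⟫|

theorem firstViolated_eq_some {i : Fin n} : firstViolated η a x = some i ↔
    η < |⟪a i, x⟫| ∧ ∀ j < i, |⟪a j, x⟫| ≤ η := by
  simp [firstViolated]

theorem firstViolated_eq_none : firstViolated η a x = none ↔ ∀ i, |⟪a i, x⟫| ≤ η := by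
  simp [firstViolated]

/-- The separation oracle of `cutRegion η θ a L` that reports the unit ball first, then the first
violated row, and only then the first violated wall: a wall is revealed only by a query that is
almost orthogonal to all rows. -/
noncomputable def cutOracle (η θ : ℝ) (a : Fin n → E) (L : List E) (x : E) : Option E :=
  open scoped Classical in
  if 1 < ‖x‖ then some x
  else match firstViolated η a x with
    | some i => some (⟪a i, x⟫ • a i)
    | none => L.find? fun z => -θ < ⟪z, x⟫

theorem cutOracle_eq_of_prefix (h : L <+: L') (hx : x ∉ cutRegion η θ a L) :
    cutOracle η θ a L' x = cutOracle η θ a L x := by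
  obtain ⟨L'', rfl⟩ := h
  unfold cutOracle
  split_ifs with hnorm
  · rfl
  cases hrow : firstViolated η a x with
  | some i => rfl
  | none =>
    obtain ⟨z, hz, hzx⟩ : ∃ z ∈ L, -θ < ⟪z, x⟫ := by
      by_contra! hall
      exact hx ⟨not_lt.1 hnorm, firstViolated_eq_none.1 hrow, hall⟩
    have hsome : (L.find? fun z => decide (-θ < ⟪z, x⟫)).isSome := by
      rw [List.find?_isSome]
      exact ⟨z, hz, decide_eq_true hzx⟩
    simp only [List.find?_append, Option.or_of_isSome hsome]

theorem firstViolated_piecewise {I : Finset (Fin n)} (hη : 0 ≤ η)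
    (hI : ∀ i ∈ firstViolated η a x, i ∈ I) :
    firstViolated η (I.piecewise a 0) x = firstViolated η a x := by
  have hmask {i : Fin n} (hi : |⟪a i, x⟫| ≤ η) : |⟪I.piecewise a 0 i, x⟫| ≤ η := by
    by_cases hiI : i ∈ I <;> simp [hiI, hi, hη]
  cases hrow : firstViolated η a x with
  | none => exact firstViolated_eq_none.2 fun i => hmask (firstViolated_eq_none.1 hrow i)
  | some i =>
    obtain ⟨hi, hlt⟩ := firstViolated_eq_some.1 hrow
    refine firstViolated_eq_some.2 ⟨?_, fun j hj => hmask (hlt j hj)⟩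
    rwa [Finset.piecewise_eq_of_mem _ _ _ (hI i hrow)]

theorem cutOracle_piecewise {I : Finset (Fin n)} (hη : 0 ≤ η)
    (hI : ∀ i ∈ firstViolated η a x, i ∈ I) :
    cutOracle η θ (I.piecewise a 0) L x = cutOracle η θ a L x := by
  unfold cutOracle
  rw [firstViolated_piecewise hη hI]
  split_ifs with hnorm
  · rfl
  cases hrow : firstViolated η a x with
  | none => rfl
  | some i => simp only [Finset.piecewise_eq_of_mem _ _ _ (hI i hrow)]

end CutOracle

theorem isSeparationOracle_cutOracle {d n : ℕ} (η θ : ℝ) (a : Fin n → EuclideanSpace ℝ (Fin d))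
    (L : List (EuclideanSpace ℝ (Fin d))) :
    IsSeparationOracle (cutRegion η θ a L) (cutOracle η θ a L) := by
  intro x
  unfold cutOracle
  split_ifs with hnorm
  · refine ⟨fun h => by simp at h, fun g hg y hy => ?_⟩
    obtain rfl := Option.some.inj hg
    rw [inner_sub_right, real_inner_self_eq_norm_sq]
    nlinarith [real_inner_le_norm x y, norm_le_one_of_mem_cutRegion hy]
  cases hrow : firstViolated η a x with
  | some i =>
    refine ⟨fun h => by simp at h, fun g hg y hy => ?_⟩
    obtain rfl := Option.some.inj hg
    have hlt := (abs_inner_le_of_mem_cutRegion hy i).trans_lt (firstViolated_eq_some.1 hrow).1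
    have hpos : 0 < |⟪a i, x⟫| := (abs_nonneg _).trans_lt hlt
    have hmul : ⟪a i, x⟫ * ⟪a i, y⟫ < ⟪a i, x⟫ * ⟪a i, x⟫ :=
      calc ⟪a i, x⟫ * ⟪a i, y⟫ ≤ |⟪a i, x⟫| * |⟪a i, y⟫| := (le_abs_self _).trans (abs_mul _ _).le
        _ < |⟪a i, x⟫| * |⟪a i, x⟫| := mul_lt_mul_of_pos_left hlt hpos
        _ = ⟪a i, x⟫ * ⟪a i, x⟫ := abs_mul_abs_self _
    rw [inner_sub_right, real_inner_smul_left, real_inner_smul_left]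
    linarith
  | none =>
    refine ⟨fun h => ⟨not_lt.1 hnorm, firstViolated_eq_none.1 hrow, ?_⟩, fun z hz y hy => ?_⟩
    · simpa using List.find?_eq_none.1 h
    · have hzx : -θ < ⟪z, x⟫ := by simpa using List.find?_some hz
      rw [inner_sub_right]
      linarith [inner_le_neg_of_mem_cutRegion hy (List.mem_of_find?_eq_some hz)]

/-- An orthonormal system in `ℝ^d` split into `P` blocks of `2 * k` axes each, which carry the
walls and the random part of the rows, and one further tag for each of the `n` rows. -/
structure BlockFrame (d P k n : ℕ) where
  /-- The axes of the blocks. -/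
  axis : Fin P × Fin (2 * k) → EuclideanSpace ℝ (Fin d)
  /-- The direction private to each row. -/
  tag : Fin n → EuclideanSpace ℝ (Fin d)
  orthonormal : Orthonormal ℝ (Sum.elim axis tag)

/-- The row tolerance `η` of the cut oracle. -/
noncomputable def rowTol (d : ℕ) : ℝ := 1 / (24 * d * √d)

/-- The depth `θ` required behind each wall. -/
noncomputable def wallGap (d : ℕ) : ℝ := (d : ℝ) ^ 2 * √d

/-- The accuracy `ε` of the feasibility problem. -/
noncomputable def accuracy (d : ℕ) : ℝ := 1 / (48 * (d : ℝ) ^ 2 * √d)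

/-- Rounding of a block vector to the grid of mesh `d⁻³`, rescaled to have integer entries. -/
noncomputable def quantize {k : ℕ} (d : ℕ) (c : Fin (2 * k) → ℝ) (b : Fin (2 * k)) : ℤ :=
  ⌊(d : ℝ) ^ 3 * c b⌋

/-- The block that the `j`-th wall belongs to: consecutive walls are grouped by `k`. -/
def blockIdx (P k : ℕ) [NeZero P] (j : ℕ) : Fin P := Fin.ofNat P (j / k)

theorem two_mul_mul_accuracy {d : ℕ} (hd : 0 < d) : 2 * d * accuracy d = rowTol d := by
  have : (0 : ℝ) < d := by exact_mod_cast hd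
  unfold accuracy rowTol
  field_simp
  norm_num

theorem accuracy_pos {d : ℕ} (hd : 0 < d) : 0 < accuracy d := by
  have : (0 : ℝ) < d := by exact_mod_cast hd
  unfold accuracy
  positivity

theorem rowTol_nonneg (d : ℕ) : 0 ≤ rowTol d := by
  unfold rowTol
  positivity

theorem accuracy_le {d : ℕ} (hd : 0 < d) : accuracy d ≤ 1 / 48 := by
  have h1 : (1 : ℝ) ≤ d := by exact_mod_cast hd
  have h2 : 1 ≤ (d : ℝ) ^ 2 * √d :=
    one_le_mul_of_one_le_of_one_le (one_le_pow₀ h1) (Real.one_le_sqrt.2 h1)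
  exact one_div_le_one_div_of_le (by norm_num) (by linarith)

namespace BlockFrame

variable {d P k n : ℕ}

theorem nonempty_of_le (h : P * (2 * k) + n ≤ d) : Nonempty (BlockFrame d P k n) := by
  obtain ⟨f⟩ : Nonempty ((Fin P × Fin (2 * k)) ⊕ Fin n ↪ Fin d) :=
    Function.Embedding.nonempty_of_card_le (by simpa using h)
  let v := EuclideanSpace.basisFun (Fin d) ℝ ∘ f
  refine ⟨⟨v ∘ Sum.inl, v ∘ Sum.inr, ?_⟩⟩
  rw [Sum.elim_comp_inl_inr]
  exact (EuclideanSpace.basisFun (Fin d) ℝ).orthonormal.comp f f.injective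

variable (B : BlockFrame d P k n)

include B in
theorem card_le : P * (2 * k) + n ≤ d := by
  simpa using B.orthonormal.linearIndependent.fintype_card_le_finrank

theorem orthonormal_axis : Orthonormal ℝ B.axis :=
  B.orthonormal.comp Sum.inl Sum.inl_injective

theorem orthonormal_tag : Orthonormal ℝ B.tag :=
  B.orthonormal.comp Sum.inr Sum.inr_injective

theorem inner_axis_tag (q : Fin P × Fin (2 * k)) (i : Fin n) : ⟪B.axis q, B.tag i⟫ = 0 :=
  B.orthonormal.2 Sum.inl_ne_inr

/-- The vector of the block `p` with given coordinates. -/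
noncomputable def blockVec (p : Fin P) : (Fin (2 * k) → ℝ) →ₗ[ℝ] EuclideanSpace ℝ (Fin d) :=
  Fintype.linearCombination ℝ fun b => B.axis (p, b)

theorem inner_blockVec_left (p : Fin P) (f : Fin (2 * k) → ℝ) (x : EuclideanSpace ℝ (Fin d)) :
    ⟪B.blockVec p f, x⟫ = ∑ b, f b * ⟪B.axis (p, b), x⟫ := by
  simp only [blockVec, Fintype.linearCombination_apply, sum_inner, real_inner_smul_left]

theorem inner_axis_blockVec (p : Fin P) (b : Fin (2 * k)) (f : Fin (2 * k) → ℝ) :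
    ⟪B.axis (p, b), B.blockVec p f⟫ = f b :=
  (B.orthonormal_axis.comp (Prod.mk p) (Prod.mk_right_injective p)).inner_right_fintype f b

theorem blockVec_injective (p : Fin P) : Function.Injective (B.blockVec p) := fun f g h =>
  funext fun b => by rw [← B.inner_axis_blockVec p b f, h, inner_axis_blockVec]

theorem inner_blockVec_of_ne {p p' : Fin P} (h : p ≠ p') (f f' : Fin (2 * k) → ℝ) :
    ⟪B.blockVec p f, B.blockVec p' f'⟫ = 0 := by
  rw [inner_blockVec_left]
  refine Finset.sum_eq_zero fun b _ => ?_
  rw [blockVec, Fintype.linearCombination_apply, inner_sum]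
  refine mul_eq_zero_of_right _ <| Finset.sum_eq_zero fun b' _ => ?_
  rw [real_inner_smul_right, B.orthonormal_axis.2 (by simp [h]), mul_zero]

/-- The wall of the block `p` with integer coordinates `z`. -/
noncomputable def wall (p : Fin P) (z : Fin (2 * k) → ℤ) : EuclideanSpace ℝ (Fin d) :=
  B.blockVec p fun b => z b

theorem abs_quantize_le {p : Fin P} {c : Fin (2 * k) → ℝ} (hc : ‖B.blockVec p c‖ = 1)
    (b : Fin (2 * k)) : |quantize d c b| ≤ (d : ℤ) ^ 3 := by
  have hcb : |c b| ≤ 1 := by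
    rw [← B.inner_axis_blockVec p b c]
    exact (abs_real_inner_le_norm _ _).trans_eq (by rw [hc, B.orthonormal_axis.1, mul_one])
  have hd3 : (0 : ℝ) ≤ (d : ℝ) ^ 3 := by positivity
  obtain ⟨hlower, hupper⟩ := abs_le.1 hcb
  refine abs_le.2 ⟨Int.le_floor.2 ?_, Int.cast_le.1 ((Int.floor_le _).trans ?_)⟩ <;>
    push_cast <;> nlinarith

theorem norm_wall_quantize_sub_le (p : Fin P) (c : Fin (2 * k) → ℝ) :
    ‖B.wall p (quantize d c) - (d : ℝ) ^ 3 • B.blockVec p c‖ ≤ 2 * k := by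
  rw [wall, ← map_smul, ← map_sub, blockVec, Fintype.linearCombination_apply]
  have hterm (b : Fin (2 * k)) :
      ‖((fun b => (quantize d c b : ℝ)) - (d : ℝ) ^ 3 • c) b • B.axis (p, b)‖ ≤ 1 := by
    rw [norm_smul, B.orthonormal_axis.1, mul_one, Real.norm_eq_abs]
    exact (Int.abs_sub_lt_one_of_floor_eq_floor (Int.floor_intCast _)).le
  simpa using norm_sum_le_of_le Finset.univ fun b _ => hterm b

theorem abs_inner_wall_quantize_sub_le (p : Fin P) (c : Fin (2 * k) → ℝ)
    {x : EuclideanSpace ℝ (Fin d)} (hx : ‖x‖ ≤ 1) :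
    |⟪B.wall p (quantize d c), x⟫ - (d : ℝ) ^ 3 * ⟪B.blockVec p c, x⟫| ≤ 2 * k := by
  rw [← real_inner_smul_left, ← inner_sub_left]
  refine (abs_real_inner_le_norm _ _).trans ?_
  exact (mul_le_of_le_one_right (norm_nonneg _) hx).trans (B.norm_wall_quantize_sub_le p c)

/-- The part of a row in the blocks, with integer entries `r` in units of `d⁻⁴`. -/
noncomputable def bulk (r : Fin P × Fin (2 * k) → ℤ) : EuclideanSpace ℝ (Fin d) :=
  ∑ q, (r q / (d : ℝ) ^ 4) • B.axis q

/-- The `i`-th row of the constraint matrix with integer entries `r`. -/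
noncomputable def row (r : Fin P × Fin (2 * k) → ℤ) (i : Fin n) : EuclideanSpace ℝ (Fin d) :=
  B.bulk r + (d : ℝ) • B.tag i

/-- All rows of the constraint matrix with integer entries `A`. -/
noncomputable def rows (A : Fin n → Fin P × Fin (2 * k) → ℤ) (i : Fin n) :
    EuclideanSpace ℝ (Fin d) :=
  B.row (A i) i

theorem pow_four_mul_inner_row (hd : 0 < d) (r : Fin P × Fin (2 * k) → ℤ) (i : Fin n)
    (x : EuclideanSpace ℝ (Fin d)) :
    (d : ℝ) ^ 4 * ⟪B.row r i, x⟫ = ∑ q, r q * ⟪B.axis q, x⟫ + (d : ℝ) ^ 5 * ⟪B.tag i, x⟫ := by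
  have hd0 : (d : ℝ) ≠ 0 := by exact_mod_cast hd.ne'
  simp only [row, bulk, inner_add_left, sum_inner, real_inner_smul_left, mul_add, Finset.mul_sum]
  congr 1
  · exact Finset.sum_congr rfl fun q _ => by field_simp
  · ring

theorem norm_bulk_sq_le {r : Fin P × Fin (2 * k) → ℤ}
    (hr : ∀ q, 0 ≤ r q ∧ r q < (d : ℤ) ^ 4) : ‖B.bulk r‖ ^ 2 ≤ d := by
  have hentry (q : Fin P × Fin (2 * k)) : (r q / (d : ℝ) ^ 4) ^ 2 ≤ 1 := by
    have h0 : (0 : ℝ) ≤ r q := by exact_mod_cast (hr q).1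
    have h1 : (r q : ℝ) ≤ (d : ℝ) ^ 4 := by exact_mod_cast (hr q).2.le
    exact pow_le_one₀ (by positivity) (div_le_one_of_le₀ h1 (by positivity))
  calc ‖B.bulk r‖ ^ 2 = ∑ q, (r q / (d : ℝ) ^ 4) ^ 2 := by
        rw [← real_inner_self_eq_norm_sq, bulk, B.orthonormal_axis.inner_sum]
        simp [sq]
    _ ≤ (P * (2 * k) : ℕ) := by
      simpa using Finset.sum_le_card_nsmul Finset.univ _ _ fun q _ => hentry q
    _ ≤ d := by exact_mod_cast (Nat.le_add_right _ n).trans B.card_le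

theorem norm_row_le {r : Fin P × Fin (2 * k) → ℤ}
    (hr : ∀ q, 0 ≤ r q ∧ r q < (d : ℤ) ^ 4) (i : Fin n) : ‖B.row r i‖ ≤ 2 * d := by
  have hbulk : ‖B.bulk r‖ ≤ d := by
    rcases d.eq_zero_or_pos with rfl | hd
    · simpa using B.norm_bulk_sq_le hr
    · have : (1 : ℝ) ≤ d := by exact_mod_cast hd
      nlinarith [B.norm_bulk_sq_le hr, norm_nonneg (B.bulk r)]
  calc ‖B.row r i‖ ≤ ‖B.bulk r‖ + ‖(d : ℝ) • B.tag i‖ := norm_add_le _ _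
    _ = ‖B.bulk r‖ + d := by rw [norm_smul, B.orthonormal_tag.1, mul_one, RCLike.norm_natCast]
    _ ≤ 2 * d := by linarith

end BlockFrame

theorem mul_le_of_mul_mul_le {a P k d : ℕ} [NeZero P] (h : a * (P * k) ≤ d) : a * k ≤ d :=
  (Nat.mul_le_mul_left a (Nat.le_mul_of_pos_left k (NeZero.pos P))).trans h

theorem cube_mul_depth_add_le {d P k : ℕ} (hd : 0 < d) [NeZero P] (hPk : 64 * (P * k) ≤ d) :
    (d : ℝ) ^ 3 * (-(2 / √d) + accuracy d) + 2 * k ≤ -wallGap d := by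
  have hd1 : (1 : ℝ) ≤ d := by exact_mod_cast hd
  have hs1 : 1 ≤ √(d : ℝ) := Real.one_le_sqrt.2 hd1
  have hk : 64 * (k : ℝ) ≤ d := by exact_mod_cast mul_le_of_mul_mul_le hPk
  have hss : (d : ℝ) = √d ^ 2 := (Real.sq_sqrt d.cast_nonneg).symm
  have hdeep : (d : ℝ) ^ 3 * (2 / √d) = 2 * wallGap d := by
    rw [wallGap, pow_succ, mul_div_assoc', div_eq_iff (by positivity)]
    linear_combination (2 * (d : ℝ) ^ 2) * hss
  have hacc : (d : ℝ) ^ 3 * accuracy d = √d / 48 := by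
    rw [accuracy, mul_one_div, div_eq_div_iff (by positivity) (by norm_num)]
    linear_combination 48 * (d : ℝ) ^ 2 * hss
  have hgap : d * √d ≤ wallGap d := by
    rw [wallGap]
    gcongr
    exact le_self_pow₀ hd1 two_ne_zero
  rw [mul_add, mul_neg, hdeep, hacc]
  nlinarith

namespace BlockFrame

variable {d P k n : ℕ} (B : BlockFrame d P k n) {A : Fin n → Fin P × Fin (2 * k) → ℤ}

/-- A correction along the tags makes a vector orthogonal to all rows without changing its
block coordinates. -/
theorem exists_forall_inner_rows_eq_zero (hd : 0 < d)
    (hA : ∀ i q, 0 ≤ A i q ∧ A i q < (d : ℤ) ^ 4) {w : EuclideanSpace ℝ (Fin d)}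
    (hw : ∀ i, ⟪B.tag i, w⟫ = 0) :
    ∃ x, (∀ q, ⟪B.axis q, x⟫ = ⟪B.axis q, w⟫) ∧ (∀ i, ⟪B.rows A i, x⟫ = 0) ∧ ‖x‖ ≤ 2 * ‖w‖ := by
  have hd0 : (0 : ℝ) < d := by exact_mod_cast hd
  let s (i : Fin n) : ℝ := -(⟪B.bulk (A i), w⟫ / d)
  let u : EuclideanSpace ℝ (Fin d) := ∑ i, s i • B.tag i
  have haxis (q : Fin P × Fin (2 * k)) : ⟪B.axis q, u⟫ = 0 := by
    simp only [u, inner_sum, real_inner_smul_right, inner_axis_tag, mul_zero, Finset.sum_const_zero]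
  have hbulk (r : Fin P × Fin (2 * k) → ℤ) : ⟪B.bulk r, u⟫ = 0 := by
    simp only [bulk, sum_inner, real_inner_smul_left, haxis, mul_zero, Finset.sum_const_zero]
  have htag (i : Fin n) : ⟪B.tag i, u⟫ = s i := B.orthonormal_tag.inner_right_fintype s i
  have hs (i : Fin n) : s i ^ 2 ≤ ‖w‖ ^ 2 / d := by
    have hcauchy : ⟪B.bulk (A i), w⟫ ^ 2 ≤ d * ‖w‖ ^ 2 := by
      rw [← sq_abs]
      calc |⟪B.bulk (A i), w⟫| ^ 2 ≤ (‖B.bulk (A i)‖ * ‖w‖) ^ 2 :=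
            pow_le_pow_left₀ (abs_nonneg _) (abs_real_inner_le_norm _ _) 2
        _ = ‖B.bulk (A i)‖ ^ 2 * ‖w‖ ^ 2 := mul_pow _ _ _
        _ ≤ d * ‖w‖ ^ 2 := mul_le_mul_of_nonneg_right (B.norm_bulk_sq_le (hA i)) (sq_nonneg _)
    rw [neg_sq, div_pow, div_le_div_iff₀ (by positivity) hd0]
    nlinarith
  have hu : ‖u‖ ≤ ‖w‖ := by
    refine le_of_sq_le_sq ?_ (norm_nonneg w)
    have hnd : (n : ℝ) ≤ d := by exact_mod_cast (Nat.le_add_left _ _).trans B.card_le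
    calc ‖u‖ ^ 2 = ∑ i, s i ^ 2 := by
          rw [← real_inner_self_eq_norm_sq, B.orthonormal_tag.inner_sum]
          simp [sq]
      _ ≤ n * (‖w‖ ^ 2 / d) := by
          simpa using Finset.sum_le_card_nsmul Finset.univ _ _ fun i _ => hs i
      _ ≤ d * (‖w‖ ^ 2 / d) := by gcongr
      _ = ‖w‖ ^ 2 := by field_simp
  refine ⟨w + u, fun q => ?_, fun i => ?_, ?_⟩
  · rw [inner_add_right, haxis, add_zero]
  · rw [rows, row, inner_add_left, inner_add_right, inner_add_right, hbulk, real_inner_smul_left,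
      real_inner_smul_left, hw, htag]
    simp only [s]
    field_simp
    ring
  · linarith [norm_add_le w u]

variable [NeZero P]

/-- The direction that the `j`-th wall is a rounded multiple of. -/
noncomputable def dir (c : ℕ → Fin (2 * k) → ℝ) (j : ℕ) : EuclideanSpace ℝ (Fin d) :=
  B.blockVec (blockIdx P k j) (c j)

/-- The first `J` walls. -/
noncomputable def walls (ζ : ℕ → Fin (2 * k) → ℤ) (J : ℕ) : List (EuclideanSpace ℝ (Fin d)) :=
  (List.range J).map fun j => B.wall (blockIdx P k j) (ζ j)

variable {B}

theorem mem_walls {ζ : ℕ → Fin (2 * k) → ℤ} {J : ℕ} {z : EuclideanSpace ℝ (Fin d)} :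
    z ∈ B.walls ζ J ↔ ∃ j < J, B.wall (blockIdx P k j) (ζ j) = z := by
  simp [walls]

theorem walls_congr {ζ ζ' : ℕ → Fin (2 * k) → ℤ} {J : ℕ} (h : ∀ j < J, ζ j = ζ' j) :
    B.walls ζ J = B.walls ζ' J :=
  List.map_congr_left fun j hj => by rw [h j (List.mem_range.1 hj)]

theorem walls_prefix (ζ : ℕ → Fin (2 * k) → ℤ) {J J' : ℕ} (h : J ≤ J') :
    B.walls ζ J <+: B.walls ζ J' := by
  have htake := List.take_prefix J (List.range J')
  rw [List.take_range, min_eq_left h] at htake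
  exact htake.map _

variable {c : ℕ → Fin (2 * k) → ℝ} {J : ℕ}

theorem exists_deep_point (hd : 0 < d) (hJ : 64 * J ≤ d)
    (horth : Orthonormal ℝ fun j : Fin J => B.dir c j)
    (hA : ∀ i q, 0 ≤ A i q ∧ A i q < (d : ℤ) ^ 4) :
    ∃ x, ‖x‖ ≤ 1 / 2 ∧ (∀ i, ⟪B.rows A i, x⟫ = 0) ∧ ∀ j < J, ⟪B.dir c j, x⟫ = -(2 / √d) := by
  have hd0 : (0 : ℝ) < d := by exact_mod_cast hd
  let w : EuclideanSpace ℝ (Fin d) := ∑ j : Fin J, (-(2 / √d)) • B.dir c j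
  have htag (i : Fin n) : ⟪B.tag i, w⟫ = 0 := by
    rw [inner_sum]
    refine Finset.sum_eq_zero fun j _ => ?_
    rw [real_inner_smul_right, real_inner_comm, dir, inner_blockVec_left]
    simp only [inner_axis_tag, mul_zero, Finset.sum_const_zero]
  have hdir (j : Fin J) : ⟪B.dir c j, w⟫ = -(2 / √d) := horth.inner_right_fintype _ j
  have hw : ‖w‖ ≤ 1 / 4 := by
    refine le_of_sq_le_sq ?_ (by norm_num)
    have hJd : 64 * (J : ℝ) ≤ d := by exact_mod_cast hJ
    calc ‖w‖ ^ 2 = ∑ _ : Fin J, (2 / √(d : ℝ)) ^ 2 := by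
          rw [← real_inner_self_eq_norm_sq, horth.inner_sum]
          simp [sq]
      _ = 4 * J / d := by
          rw [Finset.sum_const, Finset.card_univ, Fintype.card_fin, nsmul_eq_mul, div_pow,
            Real.sq_sqrt hd0.le]
          ring
      _ ≤ (1 / 4) ^ 2 := by
          rw [div_le_iff₀ hd0]
          linarith
  obtain ⟨x, haxis, hrows, hx⟩ := B.exists_forall_inner_rows_eq_zero hd hA htag
  refine ⟨x, by linarith, hrows, fun j hj => ?_⟩
  rw [← hdir ⟨j, hj⟩, dir, inner_blockVec_left, inner_blockVec_left]
  simp only [haxis]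

theorem exists_closedBall_subset_cutRegion (hd : 0 < d) (hPk : 64 * (P * k) ≤ d)
    (hJ : J ≤ P * k) (horth : Orthonormal ℝ fun j : Fin J => B.dir c j)
    (hA : ∀ i q, 0 ≤ A i q ∧ A i q < (d : ℤ) ^ 4) :
    ∃ x, ‖x‖ ≤ 1 ∧ Metric.closedBall x (accuracy d) ⊆
      cutRegion (rowTol d) (wallGap d) (B.rows A) (B.walls (fun j => quantize d (c j)) J) := by
  obtain ⟨x, hx, hrows, hdirs⟩ := B.exists_deep_point hd (by lia) horth hA
  refine ⟨x, by linarith, fun y hy => ?_⟩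
  rw [mem_closedBall_iff_norm] at hy
  have hynorm : ‖y‖ ≤ 1 := by linarith [norm_le_norm_add_norm_sub' y x, accuracy_le hd]
  have hsplit (v : EuclideanSpace ℝ (Fin d)) : ⟪v, y⟫ = ⟪v, x⟫ + ⟪v, y - x⟫ := by
    rw [← inner_add_right, add_sub_cancel]
  have hpert (v : EuclideanSpace ℝ (Fin d)) : |⟪v, y - x⟫| ≤ ‖v‖ * accuracy d :=
    (abs_real_inner_le_norm _ _).trans (mul_le_mul_of_nonneg_left hy (norm_nonneg v))
  refine ⟨hynorm, fun i => ?_, fun z hz => ?_⟩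
  · rw [hsplit, hrows, zero_add, ← two_mul_mul_accuracy hd]
    exact (hpert _).trans
      (mul_le_mul_of_nonneg_right (B.norm_row_le (hA i) i) (accuracy_pos hd).le)
  · obtain ⟨j, hj, rfl⟩ := mem_walls.1 hz
    have hround : ⟪B.wall (blockIdx P k j) (quantize d (c j)), y⟫ -
        (d : ℝ) ^ 3 * ⟪B.dir c j, y⟫ ≤ 2 * k :=
      (abs_le.1 (B.abs_inner_wall_quantize_sub_le _ _ hynorm)).2
    have hdir := (le_abs_self _).trans (hpert (B.dir c j))
    rw [horth.1 ⟨j, hj⟩, one_mul] at hdir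
    have hdepth : ⟪B.dir c j, y⟫ ≤ -(2 / √d) + accuracy d := by
      linarith [hsplit (B.dir c j), hdirs j hj, hdir]
    have hd3 := mul_le_mul_of_nonneg_left hdepth (by positivity : (0 : ℝ) ≤ (d : ℝ) ^ 3)
    linarith [cube_mul_depth_add_le hd hPk]

end BlockFrame

section HitTime

variable {d n M T : ℕ} {η θ : ℝ} {a : Fin n → EuclideanSpace ℝ (Fin d)}
  {L L' : List (EuclideanSpace ℝ (Fin d))}
  {alg : MemAlg M (EuclideanSpace ℝ (Fin d)) (Option (EuclideanSpace ℝ (Fin d)))}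

/-- The number of queries that `alg` makes against the cut oracle before it first queries a point
of the cut region (`0` if it never does). -/
noncomputable def hitTime
    (alg : MemAlg M (EuclideanSpace ℝ (Fin d)) (Option (EuclideanSpace ℝ (Fin d))))
    (η θ : ℝ) (a : Fin n → EuclideanSpace ℝ (Fin d)) (L : List (EuclideanSpace ℝ (Fin d))) : ℕ :=
  sInf {t | alg.queryAt (cutOracle η θ a L) t ∈ cutRegion η θ a L}

theorem queryAt_notMem_of_lt_hitTime {t : ℕ} (ht : t < hitTime alg η θ a L) :
    alg.queryAt (cutOracle η θ a L) t ∉ cutRegion η θ a L :=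
  Nat.notMem_of_lt_sInf ht

theorem queryAt_hitTime_mem {t : ℕ}
    (ht : alg.queryAt (cutOracle η θ a L) t ∈ cutRegion η θ a L) :
    alg.queryAt (cutOracle η θ a L) (hitTime alg η θ a L) ∈ cutRegion η θ a L :=
  Nat.sInf_mem (s := {t | alg.queryAt (cutOracle η θ a L) t ∈ cutRegion η θ a L}) ⟨t, ht⟩

theorem SolvesFeasibility.queryAt_mem_cutRegion {ε : ℝ} (hsol : SolvesFeasibility d alg T ε)
    (hball : ∃ x, ‖x‖ ≤ 1 ∧ Metric.closedBall x ε ⊆ cutRegion η θ a L) :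
    alg.queryAt (cutOracle η θ a L) (T - 1) ∈ cutRegion η θ a L := by
  obtain ⟨x, hx, hsub⟩ := hball
  exact hsol _ convex_cutRegion
    (fun y hy => mem_closedBall_zero_iff.2 (norm_le_one_of_mem_cutRegion hy))
    ⟨x, mem_closedBall_zero_iff.2 hx, hsub⟩ _ (isSeparationOracle_cutOracle η θ a L)

theorem queryAt_eq_of_prefix (h : L <+: L') {t : ℕ} (ht : t ≤ hitTime alg η θ a L) :
    alg.queryAt (cutOracle η θ a L) t = alg.queryAt (cutOracle η θ a L') t :=
  MemAlg.queryAt_congr fun _ hs =>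
    (cutOracle_eq_of_prefix h (queryAt_notMem_of_lt_hitTime (hs.trans_le ht))).symm

end HitTime

namespace BlockFrame

variable {d P k n : ℕ} (B : BlockFrame d P k n) [NeZero P]

/-- Each new direction has to avoid the earlier directions of its block and the points `X` that
answer the earlier walls of its block; these are fewer than the `2 * k` dimensions of the block. -/
theorem exists_dirs (hk : 0 < k)
    (X : List (EuclideanSpace ℝ (Fin d)) → EuclideanSpace ℝ (Fin d)) :
    ∃ c : ℕ → Fin (2 * k) → ℝ, ∀ j, ‖B.dir c j‖ = 1 ∧
      (∀ l < j, l / k = j / k → ⟪B.dir c l, B.dir c j⟫ = 0) ∧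
      ∀ l ≤ j, l / k = j / k → ⟪X (B.walls (fun i => quantize d (c i)) l), B.dir c j⟫ = 0 := by
  refine exists_seq_forall_of_forall_exists (R := fun j c a => ‖B.blockVec (blockIdx P k j) a‖ = 1 ∧
      (∀ l < j, l / k = j / k → ⟪B.dir c l, B.blockVec (blockIdx P k j) a⟫ = 0) ∧
      ∀ l ≤ j, l / k = j / k →
        ⟪X (B.walls (fun i => quantize d (c i)) l), B.blockVec (blockIdx P k j) a⟫ = 0)
    (fun {j f g a} hfg ⟨hnorm, hdir, hX⟩ => ⟨hnorm, fun l hl hlj => ?_, fun l hl hlj => ?_⟩)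
    fun j c => ?_
  · rw [dir, ← hfg l hl]
    exact hdir l hl hlj
  · rw [walls_congr fun i hi => by rw [← hfg i (hi.trans_le hl)]]
    exact hX l hl hlj
  · let start := j / k * k
    have hstart {l : ℕ} (hl : l / k = j / k) : l = start + l % k := by
      rw [← Nat.div_add_mod' l k, hl, Nat.mul_add_mod_self_right, Nat.mod_mod]
    have hj := hstart (rfl : j / k = j / k)
    have hmod := Nat.mod_lt j hk
    obtain ⟨a, hnorm, horth⟩ := exists_norm_image_eq_one_forall_inner_eq_zero
      (B.blockVec_injective (blockIdx P k j))
      (Sum.elim (fun i : Fin (j % k) => B.dir c (start + i))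
        fun i : Fin (j % k + 1) => X (B.walls (fun i => quantize d (c i)) (start + i)))
      (by simp; lia)
    refine ⟨a, hnorm, fun l hl hlj => ?_, fun l hl hlj => ?_⟩
    · have hl' := hstart hlj
      rw [hl']
      exact horth (Sum.inl ⟨l % k, by omega⟩)
    · have hl' := hstart hlj
      rw [hl']
      exact horth (Sum.inr ⟨l % k, by omega⟩)

theorem orthonormal_dir_of_forall_block {c : ℕ → Fin (2 * k) → ℝ}
    (hnorm : ∀ j, ‖B.dir c j‖ = 1)
    (hblock : ∀ j, ∀ l < j, l / k = j / k → ⟪B.dir c l, B.dir c j⟫ = 0) {J : ℕ}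
    (hJ : J ≤ P * k) : Orthonormal ℝ fun j : Fin J => B.dir c j := by
  have hlt {l j : ℕ} (hj : j < J) (hlj : l < j) : ⟪B.dir c l, B.dir c j⟫ = 0 := by
    by_cases hsame : l / k = j / k
    · exact hblock j l hlj hsame
    · refine B.inner_blockVec_of_ne (fun h => hsame ?_) _ _
      have hdiv {i : ℕ} (hi : i ≤ j) : i / k < P := Nat.div_lt_of_lt_mul (by lia)
      have hval := congrArg Fin.val h
      simpa only [blockIdx, Fin.val_ofNat, Nat.mod_eq_of_lt (hdiv hlj.le),
        Nat.mod_eq_of_lt (hdiv le_rfl)] using hval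
  refine ⟨fun j => hnorm j, fun l j hne => ?_⟩
  rcases Fin.lt_or_lt_of_ne hne with h | h
  · exact hlt j.2 h
  · rw [real_inner_comm]
    exact hlt l.2 h

/-- The cut region of the rows with entries `A` and the first `J` walls. -/
noncomputable abbrev region (A : Fin n → Fin P × Fin (2 * k) → ℤ) (ζ : ℕ → Fin (2 * k) → ℤ)
    (J : ℕ) : Set (EuclideanSpace ℝ (Fin d)) :=
  cutRegion (rowTol d) (wallGap d) (B.rows A) (B.walls ζ J)

/-- The cut oracle of the rows with entries `A` and the first `J` walls. -/
noncomputable abbrev oracle (A : Fin n → Fin P × Fin (2 * k) → ℤ) (ζ : ℕ → Fin (2 * k) → ℤ)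
    (J : ℕ) : EuclideanSpace ℝ (Fin d) → Option (EuclideanSpace ℝ (Fin d)) :=
  cutOracle (rowTol d) (wallGap d) (B.rows A) (B.walls ζ J)

end BlockFrame

/-- A run of `alg` against the rows `A` in which the walls are chosen adversarially: `time j` is
the first time that a query satisfies all rows and the first `j` walls, and the next wall, like all
later ones of the same block, is almost orthogonal to that query. -/
structure ResistingRun {d P k n M : ℕ} [NeZero P] (B : BlockFrame d P k n)
    (A : Fin n → Fin P × Fin (2 * k) → ℤ)
    (alg : MemAlg M (EuclideanSpace ℝ (Fin d)) (Option (EuclideanSpace ℝ (Fin d)))) (T : ℕ) where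
  /-- The integer coordinates of the walls. -/
  wall : ℕ → Fin (2 * k) → ℤ
  /-- The successive hitting times. -/
  time : ℕ → ℕ
  abs_wall_le : ∀ j b, |wall j b| ≤ (d : ℤ) ^ 3
  time_le : ∀ j ≤ P * k, time j ≤ T - 1
  query_mem : ∀ j ≤ P * k, alg.queryAt (B.oracle A wall (P * k)) (time j) ∈ B.region A wall j
  query_notMem : ∀ j ≤ P * k, ∀ t < time j,
    alg.queryAt (B.oracle A wall (P * k)) t ∉ B.region A wall j
  abs_inner_le : ∀ j < P * k, ∀ l ≤ j, l / k = j / k →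
    |⟪B.wall (blockIdx P k j) (wall j), alg.queryAt (B.oracle A wall (P * k)) (time l)⟫| ≤ 2 * k

theorem SolvesFeasibility.nonempty_resistingRun {d P k n M T : ℕ} [NeZero P]
    {B : BlockFrame d P k n} {A : Fin n → Fin P × Fin (2 * k) → ℤ}
    {alg : MemAlg M (EuclideanSpace ℝ (Fin d)) (Option (EuclideanSpace ℝ (Fin d)))}
    (hsol : SolvesFeasibility d alg T (accuracy d)) (hk : 0 < k) (hPk : 64 * (P * k) ≤ d)
    (hA : ∀ i q, 0 ≤ A i q ∧ A i q < (d : ℤ) ^ 4) : Nonempty (ResistingRun B A alg T) := by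
  let hit := hitTime alg (rowTol d) (wallGap d) (B.rows A)
  let X (L : List (EuclideanSpace ℝ (Fin d))) : EuclideanSpace ℝ (Fin d) :=
    alg.queryAt (cutOracle (rowTol d) (wallGap d) (B.rows A) L) (hit L)
  obtain ⟨c, hc⟩ := B.exists_dirs hk X
  let ζ (j : ℕ) : Fin (2 * k) → ℤ := quantize d (c j)
  have hlast {j : ℕ} (hj : j ≤ P * k) :
      alg.queryAt (B.oracle A ζ j) (T - 1) ∈ B.region A ζ j := by
    have hd : 0 < d := (Nat.mul_pos (by norm_num) (Nat.mul_pos (NeZero.pos P) hk)).trans_le hPk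
    exact hsol.queryAt_mem_cutRegion <| BlockFrame.exists_closedBall_subset_cutRegion hd hPk hj
      (B.orthonormal_dir_of_forall_block (fun j => (hc j).1) (fun j => (hc j).2.1) hj) hA
  have hquery {j t : ℕ} (hj : j ≤ P * k) (ht : t ≤ hit (B.walls ζ j)) :
      alg.queryAt (B.oracle A ζ (P * k)) t = alg.queryAt (B.oracle A ζ j) t :=
    (queryAt_eq_of_prefix (BlockFrame.walls_prefix ζ hj) ht).symm
  have hmem {j : ℕ} (hj : j ≤ P * k) :
      alg.queryAt (B.oracle A ζ (P * k)) (hit (B.walls ζ j)) ∈ B.region A ζ j := by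
    rw [hquery hj le_rfl]
    exact queryAt_hitTime_mem (hlast hj)
  refine ⟨⟨ζ, fun j => hit (B.walls ζ j), fun j => B.abs_quantize_le (hc j).1,
    fun j hj => Nat.sInf_le (hlast hj), fun j hj => hmem hj, fun j hj t ht => ?_,
    fun j hj l hl hlj => ?_⟩⟩
  · rw [hquery hj ht.le]
    exact queryAt_notMem_of_lt_hitTime ht
  · have hround := B.abs_inner_wall_quantize_sub_le (blockIdx P k j) (c j)
      (norm_le_one_of_mem_cutRegion (hmem (hl.trans hj.le)))
    have horth : ⟪B.blockVec (blockIdx P k j) (c j),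
        alg.queryAt (B.oracle A ζ (P * k)) (hit (B.walls ζ l))⟫ = 0 := by
      rw [hquery (hl.trans hj.le) le_rfl, real_inner_comm]
      exact (hc j).2.2 l hl hlj
    rwa [horth, mul_zero, sub_zero] at hround

theorem two_mul_rowTol_add_lt_wallGap {d k : ℕ} (hd : 0 < d) (hk : 64 * k ≤ d) :
    2 * ((d : ℝ) ^ 4 * rowTol d) + k * (2 * k) < wallGap d := by
  have hd1 : (1 : ℝ) ≤ d := by exact_mod_cast hd
  have hkd : 64 * (k : ℝ) ≤ d := by exact_mod_cast hk
  have htol : (d : ℝ) ^ 4 * rowTol d = wallGap d / 24 := by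
    rw [rowTol, wallGap, mul_one_div, div_eq_div_iff (by positivity) (by norm_num)]
    linear_combination (-24 * (d : ℝ) ^ 3) * Real.sq_sqrt d.cast_nonneg
  have hgap : (d : ℝ) ^ 2 ≤ wallGap d := le_mul_of_one_le_right (by positivity) <|
    Real.one_le_sqrt.2 hd1
  nlinarith

theorem two_mul_lt_wallGap {d k : ℕ} (hk0 : 0 < k) (hk : 64 * k ≤ d) : 2 * k < wallGap d := by
  have hk1 : (1 : ℝ) ≤ k := by exact_mod_cast hk0
  have htol : 0 ≤ (d : ℝ) ^ 4 * rowTol d := mul_nonneg (by positivity) (rowTol_nonneg d)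
  nlinarith [two_mul_rowTol_add_lt_wallGap (by lia) hk]

theorem mul_add_div_of_lt {p k l : ℕ} (hl : l < k) : (p * k + l) / k = p := by
  rw [Nat.mul_comm, Nat.mul_add_div (Nat.zero_lt_of_lt hl), Nat.div_eq_of_lt hl, add_zero]

theorem blockIdx_mul_add {P k l : ℕ} [NeZero P] (p : Fin P) (hl : l < k) :
    blockIdx P k (p * k + l) = p := by
  rw [blockIdx, mul_add_div_of_lt hl]
  exact Fin.ofNat_val_eq_self p

theorem exists_lt_succ_le_add_of_lt_mul {f : ℕ → ℕ} {P m : ℕ} (h : f P < P * (m + 1)) :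
    ∃ p < P, f (p + 1) ≤ f p + m := by
  by_contra! hlong
  have hmul (p : ℕ) (hp : p ≤ P) : p * (m + 1) ≤ f p := by
    induction p with
    | zero => simp
    | succ p ih =>
      have := hlong p hp
      have := ih (Nat.le_of_succ_le hp)
      lia
  exact (hmul P le_rfl).not_gt h

namespace ResistingRun

variable {d P k n M T : ℕ} [NeZero P] {B : BlockFrame d P k n}
  {A : Fin n → Fin P × Fin (2 * k) → ℤ}
  {alg : MemAlg M (EuclideanSpace ℝ (Fin d)) (Option (EuclideanSpace ℝ (Fin d)))}
  (R : ResistingRun B A alg T)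

theorem inner_wall_le {j J : ℕ} (hj : j < J) (hJ : J ≤ P * k) :
    ⟪B.wall (blockIdx P k j) (R.wall j), alg.queryAt (B.oracle A R.wall (P * k)) (R.time J)⟫ ≤
      -wallGap d :=
  inner_le_neg_of_mem_cutRegion (R.query_mem J hJ) (BlockFrame.mem_walls.2 ⟨j, hj, rfl⟩)

theorem time_lt_succ (hgap : 2 * k < wallGap d) {j : ℕ} (hj : j < P * k) :
    R.time j < R.time (j + 1) := by
  refine lt_of_le_of_ne (not_lt.1 fun hlt => ?_) fun heq => ?_
  · exact R.query_notMem j hj.le _ hlt <|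
      cutRegion_anti (BlockFrame.walls_prefix R.wall j.le_succ).subset (R.query_mem (j + 1) hj)
  · have hdeep := R.inner_wall_le j.lt_succ_self hj
    have hsmall := (abs_le.1 (R.abs_inner_le j hj j le_rfl rfl)).1
    rw [heq] at hsmall
    linarith

theorem time_strictMonoOn (hgap : 2 * k < wallGap d) :
    StrictMonoOn R.time (Set.Iic (P * k)) :=
  strictMonoOn_Iic_of_lt_succ fun _ hj => R.time_lt_succ hgap hj

include R in
theorem mul_lt (hk : 0 < k) (hgap : 2 * k < wallGap d) : P * k < T := by
  have hle (j : ℕ) (hj : j ≤ P * k) : j ≤ R.time j := by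
    induction j with
    | zero => exact Nat.zero_le _
    | succ j ih => exact (ih (Nat.le_of_succ_le hj)).trans_lt (R.time_lt_succ hgap hj)
  have hpos : 0 < P * k := Nat.mul_pos (NeZero.pos P) hk
  have hlast := (hle _ le_rfl).trans (R.time_le _ le_rfl)
  lia

theorem exists_short_block {m : ℕ} (hT : T ≤ P * m) :
    ∃ p : Fin P, R.time ((p + 1) * k) ≤ R.time (p * k) + m := by
  have hpos := NeZero.pos P
  have hlast := R.time_le _ le_rfl
  obtain ⟨p, hp, hshort⟩ := exists_lt_succ_le_add_of_lt_mul (f := fun p => R.time (p * k))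
    (show R.time (P * k) < P * (m + 1) by lia)
  exact ⟨⟨p, hp⟩, hshort⟩

end ResistingRun

theorem MemAlg.queryFrom_cutOracle_piecewise {d n M : ℕ}
    {alg : MemAlg M (EuclideanSpace ℝ (Fin d)) (Option (EuclideanSpace ℝ (Fin d)))}
    {η θ : ℝ} (hη : 0 ≤ η) {a : Fin n → EuclideanSpace ℝ (Fin d)}
    {L : List (EuclideanSpace ℝ (Fin d))} {μ : Fin M → Bool} {I : Finset (Fin n)} {t : ℕ}
    (hI : ∀ s < t, ∀ i ∈ firstViolated η a (alg.queryFrom (cutOracle η θ a L) μ s), i ∈ I) :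
    alg.queryFrom (cutOracle η θ (I.piecewise a 0) L) μ t =
      alg.queryFrom (cutOracle η θ a L) μ t :=
  (queryFrom_congr fun s hs => (cutOracle_piecewise hη (hI s hs)).symm).symm

/-- The query made after `t` iterations from the memory state `μ`, simulated with the knowledge of
only those rows that are indexed by `I`. -/
noncomputable def BlockFrame.replay {d P k n M : ℕ} [NeZero P] (B : BlockFrame d P k n)
    (alg : MemAlg M (EuclideanSpace ℝ (Fin d)) (Option (EuclideanSpace ℝ (Fin d))))
    (μ : Fin M → Bool) (ζ : ℕ → Fin (2 * k) → ℤ) (I : Finset (Fin n))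
    (A : Fin n → Fin P × Fin (2 * k) → ℤ) (t : ℕ) : EuclideanSpace ℝ (Fin d) :=
  alg.queryFrom (cutOracle (rowTol d) (wallGap d) (I.piecewise (B.rows A) 0) (B.walls ζ (P * k)))
    μ t

/-- The rows `A` are compatible with the given account of a block `p` of a resisting run: memory
state `μ` at the start of the block, walls `ζ`, rows `I` revealed in the block, and lags `τ` of the
hitting times behind the start of the block. -/
structure IsTranscript {d P k n M : ℕ} [NeZero P] (B : BlockFrame d P k n)
    (alg : MemAlg M (EuclideanSpace ℝ (Fin d)) (Option (EuclideanSpace ℝ (Fin d)))) (p : Fin P)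
    (μ : Fin M → Bool) (ζ : ℕ → Fin (2 * k) → ℤ) (I : Finset (Fin n)) (τ : Fin k → ℕ)
    (A : Fin n → Fin P × Fin (2 * k) → ℤ) : Prop where
  abs_inner_rows_le : ∀ l i, |⟪B.rows A i, B.replay alg μ ζ I A (τ l)⟫| ≤ rowTol d
  inner_wall_le : ∀ l : Fin k,
    ⟪B.wall p (ζ (p * k + l)), B.replay alg μ ζ I A (τ l)⟫ ≤ -wallGap d
  abs_inner_wall_le : ∀ l l' : Fin k, l < l' →
    |⟪B.wall p (ζ (p * k + l')), B.replay alg μ ζ I A (τ l)⟫| ≤ 2 * k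

namespace ResistingRun

variable {d P k n M T : ℕ} [NeZero P] {B : BlockFrame d P k n}
  {A : Fin n → Fin P × Fin (2 * k) → ℤ}
  {alg : MemAlg M (EuclideanSpace ℝ (Fin d)) (Option (EuclideanSpace ℝ (Fin d)))}
  (R : ResistingRun B A alg T)

/-- The rows that are first violated by one of the `m` queries from the time `s` on. -/
noncomputable def revealed (s m : ℕ) : Finset (Fin n) :=
  (Finset.range m).biUnion fun t => (firstViolated (rowTol d) (B.rows A)
    (alg.queryAt (B.oracle A R.wall (P * k)) (s + t))).toFinset

theorem card_revealed_le (s m : ℕ) : (R.revealed s m).card ≤ m := by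
  refine (Finset.card_biUnion_le_card_mul _ _ 1 fun t _ => ?_).trans_eq (by simp)
  cases firstViolated (rowTol d) (B.rows A) _ <;> simp

theorem replay_revealed {ζ : ℕ → Fin (2 * k) → ℤ} (hζ : ∀ j < P * k, ζ j = R.wall j) {s m t : ℕ}
    (ht : t ≤ m) :
    B.replay alg (alg.mem (B.oracle A R.wall (P * k)) s) ζ (R.revealed s m) A t =
      alg.queryAt (B.oracle A R.wall (P * k)) (s + t) := by
  rw [BlockFrame.replay, BlockFrame.walls_congr hζ, MemAlg.queryAt_add]
  refine MemAlg.queryFrom_cutOracle_piecewise (rowTol_nonneg d) fun r hr i hi => ?_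
  rw [← MemAlg.queryAt_add] at hi
  exact Finset.mem_biUnion.2 ⟨r, Finset.mem_range.2 (hr.trans_le ht), Option.mem_toFinset.2 hi⟩

theorem isTranscript (hgap : 2 * k < wallGap d) {ζ : ℕ → Fin (2 * k) → ℤ}
    (hζ : ∀ j < P * k, ζ j = R.wall j) {m : ℕ} {p : Fin P}
    (hp : R.time ((p + 1) * k) ≤ R.time (p * k) + m) :
    ∃ τ : Fin k → Fin (m + 1), IsTranscript B alg p
      (alg.mem (B.oracle A R.wall (P * k)) (R.time (p * k))) ζ (R.revealed (R.time (p * k)) m)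
      (fun l => τ l) A := by
  have hend : (p + 1) * k ≤ P * k := Nat.mul_le_mul_right k p.2
  have hindex {l : ℕ} (hl : l < k) : p * k + l < P * k := by lia
  have hmono {i j : ℕ} (hij : i ≤ j) (hj : j ≤ P * k) : R.time i ≤ R.time j :=
    (R.time_strictMonoOn hgap).monotoneOn (hij.trans hj) hj hij
  have hlag (l : Fin k) : R.time (p * k + l + 1) - R.time (p * k) < m + 1 := by
    have := hmono (show p * k + l + 1 ≤ (p + 1) * k by lia) hend
    lia
  have hreplay (l : Fin k) : B.replay alg (alg.mem (B.oracle A R.wall (P * k)) (R.time (p * k))) ζ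
      (R.revealed (R.time (p * k)) m) A (R.time (p * k + l + 1) - R.time (p * k)) =
        alg.queryAt (B.oracle A R.wall (P * k)) (R.time (p * k + l + 1)) := by
    rw [R.replay_revealed hζ (Nat.le_of_lt_succ (hlag l)),
      Nat.add_sub_of_le (hmono (by lia) (hindex l.2))]
  refine ⟨fun l => ⟨_, hlag l⟩, ⟨fun l i => ?_, fun l => ?_, fun l l' hl => ?_⟩⟩
  · rw [hreplay]
    exact abs_inner_le_of_mem_cutRegion (R.query_mem _ (hindex l.2)) i
  · rw [hreplay, hζ _ (hindex l.2)]
    simpa only [blockIdx_mul_add p l.2] using R.inner_wall_le (Nat.lt_succ_self _) (hindex l.2)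
  · have hl1 : (l : ℕ) + 1 ≤ l' := hl
    have hsame : (p * k + l + 1) / k = (p * k + l') / k := by
      rw [add_assoc, mul_add_div_of_lt (hl1.trans_lt l'.2), mul_add_div_of_lt l'.2]
    rw [hreplay, hζ _ (hindex l'.2)]
    simpa only [blockIdx_mul_add p l'.2] using R.abs_inner_le (p * k + l') (hindex l'.2)
      (p * k + l + 1) (by lia) hsame

end ResistingRun

theorem BlockFrame.inner_wall {d P k n : ℕ} (B : BlockFrame d P k n) (p : Fin P)
    (z : Fin (2 * k) → ℤ) (x : EuclideanSpace ℝ (Fin d)) :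
    ⟪B.wall p z, x⟫ =
      ∑ q : Fin P × Fin (2 * k), ((if q.1 = p then z q.2 else 0 : ℤ) : ℝ) * ⟪B.axis q, x⟫ := by
  rw [wall, inner_blockVec_left, Fintype.sum_prod_type, Finset.sum_eq_single p]
  · simp only [if_true]
  · exact fun q _ hq => by simp only [hq, if_false, Int.cast_zero, zero_mul, Finset.sum_const_zero]
  · exact fun hp => absurd (Finset.mem_univ p) hp

section WallCodes

variable {d P k : ℕ}

/-- All sequences of walls with the entries allowed by `quantize` that vanish from the index
`P * k` on. -/
noncomputable def wallCodes (d P k : ℕ) : Finset (ℕ → Fin (2 * k) → ℤ) :=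
  (Fintype.piFinset fun _ : Fin (P * k) =>
    Fintype.piFinset fun _ => Finset.Icc (-(d : ℤ) ^ 3) ((d : ℤ) ^ 3)).map
      ⟨fun z => Function.extend Fin.val z 0, Function.extend_injective Fin.val_injective 0⟩

theorem card_wallCodes (d P k : ℕ) :
    (wallCodes d P k).card = ((2 * d ^ 3 + 1) ^ (2 * k)) ^ (P * k) := by
  simp only [wallCodes, Finset.card_map, Fintype.card_piFinset, Finset.prod_const,
    Finset.card_univ, Fintype.card_fin, Int.card_Icc]
  congr 2
  lia

theorem abs_le_of_mem_wallCodes {ζ : ℕ → Fin (2 * k) → ℤ} (hζ : ζ ∈ wallCodes d P k) (j : ℕ)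
    (b : Fin (2 * k)) : |ζ j b| ≤ (d : ℤ) ^ 3 := by
  obtain ⟨z, hz, rfl⟩ := Finset.mem_map.1 hζ
  change |Function.extend Fin.val z 0 j b| ≤ (d : ℤ) ^ 3
  by_cases hj : j < P * k
  · rw [show j = Fin.val (⟨j, hj⟩ : Fin (P * k)) from rfl, Fin.val_injective.extend_apply]
    exact abs_le.2 (Finset.mem_Icc.1 (Fintype.mem_piFinset.1 (Fintype.mem_piFinset.1 hz _) b))
  · rw [Function.extend_apply' _ _ _ (by rintro ⟨i, rfl⟩; exact hj i.2)]
    simp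

theorem exists_mem_wallCodes {ζ : ℕ → Fin (2 * k) → ℤ} (hζ : ∀ j b, |ζ j b| ≤ (d : ℤ) ^ 3) :
    ∃ ζ' ∈ wallCodes d P k, ∀ j < P * k, ζ' j = ζ j := by
  refine ⟨_, Finset.mem_map_of_mem _ (Fintype.mem_piFinset.2 fun j : Fin (P * k) =>
    Fintype.mem_piFinset.2 fun b => Finset.mem_Icc.2 (abs_le.1 (hζ j b))), fun j hj => ?_⟩
  exact Fin.val_injective.extend_apply (fun j : Fin (P * k) => ζ j) 0 ⟨j, hj⟩

end WallCodes

section EntryBox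

variable {d P k n : ℕ}

/-- The admissible integer entries of the rows. -/
noncomputable def entryBox (d P k n : ℕ) : Finset (Fin n → Fin P × Fin (2 * k) → ℤ) :=
  Fintype.piFinset fun _ => Fintype.piFinset fun _ => Finset.Ico 0 ((d : ℤ) ^ 4)

theorem mem_entryBox {A : Fin n → Fin P × Fin (2 * k) → ℤ} :
    A ∈ entryBox d P k n ↔ ∀ i q, 0 ≤ A i q ∧ A i q < (d : ℤ) ^ 4 := by
  simp only [entryBox, Fintype.mem_piFinset, Finset.mem_Ico]

theorem card_entryBox (d P k n : ℕ) :
    (entryBox d P k n).card = ((d ^ 4) ^ (P * (2 * k))) ^ n := by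
  simp only [entryBox, Fintype.card_piFinset, Finset.prod_const, Finset.card_univ, Int.card_Ico,
    Fintype.card_prod, Fintype.card_fin, sub_zero, ← Nat.cast_pow, Int.toNat_natCast]

end EntryBox

section Counting

variable {d P k n M : ℕ} [NeZero P] {B : BlockFrame d P k n}
  {alg : MemAlg M (EuclideanSpace ℝ (Fin d)) (Option (EuclideanSpace ℝ (Fin d)))}

theorem dependsOn_replay {μ : Fin M → Bool} {ζ : ℕ → Fin (2 * k) → ℤ} {I : Finset (Fin n)}
    {τ : Fin k → ℕ} : DependsOn (fun A l => B.replay alg μ ζ I A (τ l)) (I : Set (Fin n)) := by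
  intro A A' hA
  have hrows : I.piecewise (B.rows A) 0 = I.piecewise (B.rows A') 0 :=
    I.piecewise_congr (fun i hi => congrArg (B.row · i) (hA i hi)) fun _ _ => rfl
  simp only [BlockFrame.replay, hrows]

theorem card_mul_two_pow_le_of_isTranscript (hd : 0 < d) (hkd : 64 * k ≤ d) {p : Fin P}
    {μ : Fin M → Bool} {ζ : ℕ → Fin (2 * k) → ℤ} {I : Finset (Fin n)} {τ : Fin k → ℕ}
    {S : Finset (Fin n → Fin P × Fin (2 * k) → ℤ)}
    (hbox : ∀ A ∈ S, ∀ i q, 0 ≤ A i q ∧ A i q < (d : ℤ) ^ 4)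
    (hS : ∀ A ∈ S, IsTranscript B alg p μ ζ I τ A) (hζ : ∀ j b, |ζ j b| ≤ (d : ℤ) ^ 3) :
    S.card * (2 ^ k) ^ (n - I.card) ≤ ((d ^ 4 + 2 * (k * d ^ 3)) ^ (P * (2 * k))) ^ n := by
  have hd4 : (0 : ℝ) ≤ (d : ℝ) ^ 4 := by positivity
  have hcount := card_mul_two_pow_le_of_triangular (S := S) (I := I) (N := d ^ 4) (B := d ^ 3)
    (Z := fun l q => if q.1 = p then ζ (p * k + l) q.2 else 0)
    (w := fun A l => B.replay alg μ ζ I A (τ l)) (p := fun x q => ⟪B.axis q, x⟫)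
    (o := fun x i => (d : ℝ) ^ 5 * ⟪B.tag i, x⟫) (ρ := (d : ℝ) ^ 4 * rowTol d) (θ := wallGap d)
    (δ := 2 * k) (by exact_mod_cast hbox) (fun l q => ?_) dependsOn_replay
    (fun A hA l i _ => ?_) (fun A hA l => ?_) (fun A hA l l' hl => ?_) (by positivity)
    (two_mul_rowTol_add_lt_wallGap hd hkd)
  · simpa using hcount
  · split_ifs
    · exact_mod_cast hζ _ _
    · simp
  · rw [← B.pow_four_mul_inner_row hd, abs_mul, abs_of_nonneg hd4]
    exact mul_le_mul_of_nonneg_left ((hS A hA).abs_inner_rows_le l i) hd4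
  · rw [← B.inner_wall]
    exact (le_neg_of_le_neg ((hS A hA).inner_wall_le l)).trans (neg_le_abs _)
  · rw [← B.inner_wall]
    exact (hS A hA).abs_inner_wall_le l l' hl

/-- The possible parameters `(p, μ, ζ, I, τ)` of `IsTranscript` for a block of at most `m`
queries. -/
noncomputable def transcriptCodes (d P k n M m : ℕ) : Finset (Fin P × (Fin M → Bool) ×
    (ℕ → Fin (2 * k) → ℤ) × Finset (Fin n) × (Fin k → Fin (m + 1))) :=
  Finset.univ ×ˢ Finset.univ ×ˢ wallCodes d P k ×ˢ
    Finset.univ.filter (fun I => I.card ≤ m) ×ˢ Finset.univ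

theorem card_transcriptCodes_le (d P k n M m : ℕ) : (transcriptCodes d P k n M m).card ≤
    P * (2 ^ M * (((2 * d ^ 3 + 1) ^ (2 * k)) ^ (P * k) * (2 ^ n * (m + 1) ^ k))) := by
  simp only [transcriptCodes, Finset.card_product, Finset.card_univ, Fintype.card_fin,
    Fintype.card_fun, Fintype.card_bool]
  gcongr
  · exact (card_wallCodes d P k).le
  · exact (Finset.card_filter_le _ _).trans_eq (by simp)

theorem SolvesFeasibility.exists_isTranscript {T m : ℕ}
    (hsol : SolvesFeasibility d alg T (accuracy d)) (hk : 0 < k) (hPk : 64 * (P * k) ≤ d)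
    (hT : T ≤ P * m) {A : Fin n → Fin P × Fin (2 * k) → ℤ}
    (hA : ∀ i q, 0 ≤ A i q ∧ A i q < (d : ℤ) ^ 4) :
    ∃ c ∈ transcriptCodes d P k n M m,
      IsTranscript B alg c.1 c.2.1 c.2.2.1 c.2.2.2.1 (fun l => c.2.2.2.2 l) A := by
  obtain ⟨R⟩ : Nonempty (ResistingRun B A alg T) := hsol.nonempty_resistingRun hk hPk hA
  have hkd : 64 * k ≤ d := mul_le_of_mul_mul_le hPk
  obtain ⟨p, hp⟩ := R.exists_short_block hT
  obtain ⟨ζ, hζ, hwall⟩ := exists_mem_wallCodes R.abs_wall_le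
  obtain ⟨τ, hτ⟩ := R.isTranscript (two_mul_lt_wallGap hk hkd) hwall hp
  refine ⟨⟨p, _, ζ, _, τ⟩, ?_, hτ⟩
  simp only [transcriptCodes, Finset.mem_product]
  exact ⟨Finset.mem_univ _, Finset.mem_univ _, hζ,
    Finset.mem_filter.2 ⟨Finset.mem_univ _, R.card_revealed_le _ m⟩, Finset.mem_univ _⟩

theorem SolvesFeasibility.card_box_mul_two_pow_le {T m : ℕ}
    (hsol : SolvesFeasibility d alg T (accuracy d)) (hk : 0 < k) (hPk : 64 * (P * k) ≤ d)
    (hdim : P * (2 * k) + n ≤ d) (hT : T ≤ P * m) :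
    ((d ^ 4) ^ (P * (2 * k))) ^ n * (2 ^ k) ^ (n - m) ≤
      P * (2 ^ M * (((2 * d ^ 3 + 1) ^ (2 * k)) ^ (P * k) * (2 ^ n * (m + 1) ^ k))) *
        ((d ^ 4 + 2 * (k * d ^ 3)) ^ (P * (2 * k))) ^ n := by
  classical
  obtain ⟨B⟩ := BlockFrame.nonempty_of_le hdim
  have hkd : 64 * k ≤ d := mul_le_of_mul_mul_le hPk
  let compatible (c : Fin P × (Fin M → Bool) × (ℕ → Fin (2 * k) → ℤ) × Finset (Fin n) ×
      (Fin k → Fin (m + 1))) : Finset (Fin n → Fin P × Fin (2 * k) → ℤ) :=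
    (entryBox d P k n).filter (IsTranscript B alg c.1 c.2.1 c.2.2.1 c.2.2.2.1 fun l => c.2.2.2.2 l)
  have hcover : entryBox d P k n ⊆ (transcriptCodes d P k n M m).biUnion compatible := by
    intro A hA
    obtain ⟨c, hc, hcA⟩ := hsol.exists_isTranscript hk hPk hT (mem_entryBox.1 hA)
    exact Finset.mem_biUnion.2 ⟨c, hc, Finset.mem_filter.2 ⟨hA, hcA⟩⟩
  have hfiber : ∀ c ∈ transcriptCodes d P k n M m, (compatible c).card * (2 ^ k) ^ (n - m) ≤
      ((d ^ 4 + 2 * (k * d ^ 3)) ^ (P * (2 * k))) ^ n := by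
    intro c hc
    simp only [transcriptCodes, Finset.mem_product, Finset.mem_filter] at hc
    obtain ⟨-, -, hζ, ⟨-, hI⟩, -⟩ := hc
    refine (Nat.mul_le_mul_left _ (Nat.pow_le_pow_right (by positivity) (by lia))).trans <|
      card_mul_two_pow_le_of_isTranscript (by lia) hkd
        (fun A hA => mem_entryBox.1 (Finset.mem_filter.1 hA).1)
        (fun A hA => (Finset.mem_filter.1 hA).2)
        (abs_le_of_mem_wallCodes hζ)
  rw [← card_entryBox]
  calc (entryBox d P k n).card * (2 ^ k) ^ (n - m)
      ≤ (∑ c ∈ transcriptCodes d P k n M m, (compatible c).card) * (2 ^ k) ^ (n - m) :=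
        Nat.mul_le_mul_right _ ((Finset.card_le_card hcover).trans Finset.card_biUnion_le)
    _ ≤ (transcriptCodes d P k n M m).card *
          ((d ^ 4 + 2 * (k * d ^ 3)) ^ (P * (2 * k))) ^ n := by
        rw [Finset.sum_mul]
        exact Finset.sum_le_card_nsmul _ _ _ hfiber
    _ ≤ _ := Nat.mul_le_mul_right _ (card_transcriptCodes_le d P k n M m)

end Counting

theorem mul_log_two_le_of_box_mul_two_pow_le {d k P n m M : ℕ} (hd : 0 < d) (hP : 0 < P)
    (hmn : m ≤ n)
    (h : ((d ^ 4) ^ (P * (2 * k))) ^ n * (2 ^ k) ^ (n - m) ≤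
      P * (2 ^ M * (((2 * d ^ 3 + 1) ^ (2 * k)) ^ (P * k) * (2 ^ n * (m + 1) ^ k))) *
        ((d ^ 4 + 2 * (k * d ^ 3)) ^ (P * (2 * k))) ^ n) :
    k * (n - m) * Real.log 2 ≤ Real.log P + M * Real.log 2 +
      2 * k * (P * k) * Real.log (2 * d ^ 3 + 1) + n * Real.log 2 + k * Real.log (m + 1) +
      n * (2 * (P * k)) * (2 * k / d) := by
  have : (0 : ℝ) < d := by exact_mod_cast hd
  have : (0 : ℝ) < P := by exact_mod_cast hP
  have : (0 : ℝ) < 2 * d ^ 3 + 1 := by positivity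
  have : (0 : ℝ) < m + 1 := by positivity
  have hgrow : (0 : ℝ) < 1 + 2 * k / d := by positivity
  have hreal : (((d : ℝ) ^ 4) ^ (P * (2 * k))) ^ n * (2 ^ k) ^ (n - m) ≤
      P * (2 ^ M * (((2 * (d : ℝ) ^ 3 + 1) ^ (2 * k)) ^ (P * k) * (2 ^ n * ((m : ℝ) + 1) ^ k))) *
        (((d : ℝ) ^ 4 * (1 + 2 * k / d)) ^ (P * (2 * k))) ^ n := by
    have hbox : (d : ℝ) ^ 4 * (1 + 2 * k / d) = d ^ 4 + 2 * (k * d ^ 3) := by field_simp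
    rw [hbox]
    exact_mod_cast h
  have hlog := Real.log_le_log (by positivity) hreal
  simp (disch := positivity) only [Real.log_mul, Real.log_pow] at hlog
  push_cast [Nat.cast_sub hmn] at hlog
  have hgrow_log : n * (2 * (P * k)) * Real.log (1 + 2 * k / d) ≤
      n * (2 * (P * k)) * (2 * k / (d : ℝ)) :=
    mul_le_mul_of_nonneg_left (by linarith [Real.log_le_sub_one_of_pos hgrow]) (by positivity)
  linarith

theorem two_mul_accuracy_lt {d : ℕ} (hd : 0 < d) : 2 * accuracy d < 1 / (2 * √d) := by
  have hd1 : (1 : ℝ) ≤ d := by exact_mod_cast hd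
  have hd2 : 1 ≤ (d : ℝ) ^ 2 := one_le_pow₀ hd1
  rw [accuracy, mul_one_div, div_lt_div_iff₀ (by positivity) (by positivity)]
  have : 0 < √(d : ℝ) := by positivity
  nlinarith

theorem one_le_log_of_three_le {d : ℕ} (hd : 3 ≤ d) : 1 ≤ Real.log d := by
  have hdR : (3 : ℝ) ≤ d := by exact_mod_cast hd
  exact (Real.le_log_iff_exp_le (by linarith)).2 (by linarith [Real.exp_one_lt_d9])

theorem log_two_mul_cube_add_one_le {d : ℕ} (hd : 3 ≤ d) :
    Real.log (2 * d ^ 3 + 1) ≤ 4 * Real.log d := by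
  have hdR : (3 : ℝ) ≤ d := by exact_mod_cast hd
  rw [show (4 : ℝ) = (4 : ℕ) by norm_num, ← Real.log_pow]
  refine Real.log_le_log (by positivity) ?_
  nlinarith [one_le_pow₀ (n := 3) (by linarith : (1 : ℝ) ≤ d)]

theorem mul_log_le_of_params {d k P n : ℕ} (hd : 3 ≤ d)
    (hPk : 256 * Real.log d * (P * k) ≤ n) :
    2 * k * (P * k) * Real.log (2 * d ^ 3 + 1) ≤ k * n / 32 := by
  calc 2 * k * (P * k) * Real.log (2 * d ^ 3 + 1) ≤ 2 * k * (P * k) * (4 * Real.log d) := by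
        gcongr
        exact log_two_mul_cube_add_one_le hd
    _ = k * (256 * Real.log d * (P * k)) / 32 := by ring
    _ ≤ k * n / 32 := by gcongr

theorem mul_le_of_log_mul_le {d a b n : ℕ} (hd : 3 ≤ d) (h : a * Real.log d * b ≤ n) :
    a * b ≤ n := by
  suffices (a * b : ℝ) ≤ n by exact_mod_cast this
  calc (a * b : ℝ) = a * 1 * b := by ring
    _ ≤ a * Real.log d * b := by
      gcongr
      exact one_le_log_of_three_le hd
    _ ≤ n := h

theorem codeLength_lt_of_params {d M k P n m : ℕ} (hd : 3 ≤ d) (hP : 0 < P) (hk : 64 ≤ k)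
    (hM : 64 * M ≤ k * n) (hPk : 256 * Real.log d * (P * k) ≤ n)
    (hm : 4 * m ≤ n) (hn : 2 * n ≤ d) :
    Real.log P + M * Real.log 2 + 2 * k * (P * k) * Real.log (2 * d ^ 3 + 1) +
      n * Real.log 2 + k * Real.log (m + 1) + n * (2 * (P * k)) * (2 * k / d) <
      k * (n - m) * Real.log 2 := by
  have hkR : (64 : ℝ) ≤ k := by exact_mod_cast hk
  have hdR : (0 : ℝ) < d := by exact_mod_cast (by lia : 0 < d)
  have hPkn := mul_le_of_log_mul_le (a := 256) (b := P * k) hd (by exact_mod_cast hPk)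
  have hPnNat : P ≤ n := by nlinarith
  have hPn : (P : ℝ) ≤ n := by exact_mod_cast hPnNat
  have hnR : (0 : ℝ) < n := by exact_mod_cast hP.trans_le hPnNat
  have hMR : 64 * (M : ℝ) ≤ k * n := by exact_mod_cast hM
  have hmR : 4 * (m : ℝ) ≤ n := by exact_mod_cast hm
  have hPkd : 256 * ((P : ℝ) * k) ≤ d := by exact_mod_cast hPkn.trans (by lia)
  have hdigits := mul_log_le_of_params hd hPk
  have hlogP : Real.log P ≤ k * n / 64 := by
    nlinarith [Real.log_le_self P.cast_nonneg]
  have hlogM : M * Real.log 2 ≤ k * n / 64 := by nlinarith [Real.log_two_lt_d9]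
  have hlogsubset : n * Real.log 2 ≤ k * n / 64 := by nlinarith [Real.log_two_lt_d9]
  have hlogtime : k * Real.log (m + 1) ≤ k * n / 4 := by
    nlinarith [Real.log_le_sub_one_of_pos (by positivity : (0 : ℝ) < m + 1)]
  have hgrow : n * (2 * (P * k)) * (2 * k / d) ≤ (k * n / 64 : ℝ) := by
    calc n * (2 * (P * k)) * (2 * k / d) = k * n * (4 * (P * k) / d : ℝ) := by ring
      _ ≤ k * n * (1 / 64) := by
        refine mul_le_mul_of_nonneg_left ?_ (by positivity)
        rw [div_le_iff₀ hdR]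
        linarith
      _ = k * n / 64 := by ring
  have hgain : k * n / 2 ≤ k * (n - m) * Real.log 2 := by
    calc (k * n / 2 : ℝ) = k * (3 / 4 * n) * (2 / 3) := by ring
      _ ≤ k * (n - m) * Real.log 2 := by
        refine mul_le_mul (mul_le_mul_of_nonneg_left ?_ (by positivity)) ?_ (by norm_num) ?_
        · linarith
        · linarith [Real.log_two_gt_d9]
        · exact mul_nonneg (by positivity) (by linarith)
  have : 0 < (k * n : ℝ) := by positivity
  linarith

namespace SolvesFeasibility

variable {d M T : ℕ}
  {alg : MemAlg M (EuclideanSpace ℝ (Fin d)) (Option (EuclideanSpace ℝ (Fin d)))}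
  (hsol : SolvesFeasibility d alg T (accuracy d))

include hsol

theorem dim_le_sixtyFour_mul (hd : 64 ≤ d) : d ≤ 64 * T := by
  have : NeZero (d / 64) := ⟨by lia⟩
  obtain ⟨B⟩ := BlockFrame.nonempty_of_le (d := d) (P := d / 64) (k := 1) (n := 0) (by lia)
  obtain ⟨R⟩ : Nonempty (ResistingRun B 0 alg T) :=
    hsol.nonempty_resistingRun one_pos (by lia) fun i => i.elim0
  have hlt := R.mul_lt one_pos (two_mul_lt_wallGap one_pos (by lia))
  lia

theorem mul_lt_of_params {k P n m : ℕ} (hd : 64 ≤ d) (hP : 0 < P) (hk : 64 ≤ k)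
    (hM : 64 * M ≤ k * n) (hPk : 256 * Real.log d * (P * k) ≤ n) (hm : 4 * m ≤ n)
    (hn : 2 * n ≤ d) : P * m < T := by
  by_contra! hT
  have : NeZero P := ⟨hP.ne'⟩
  have hPkn := mul_le_of_log_mul_le (d := d) (a := 256) (b := P * k) (by lia)
    (by exact_mod_cast hPk)
  have hcount := mul_log_two_le_of_box_mul_two_pow_le (by lia) hP (by lia)
    (hsol.card_box_mul_two_pow_le (n := n) (m := m) (k := k) (by lia) (by lia) (by lia) hT)
  exact hcount.not_gt (codeLength_lt_of_params (by lia) hP hk hM hPk hm hn)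

theorem exists_params (hd : 64 ≤ d) (hM : d ≤ M) : ∃ k P n : ℕ, d ≤ 3 * n ∧ k * n ≤ 65 * M ∧
    n < (P + 1) * (256 * Real.log d * k) ∧ (P + 1) * n ≤ 32 * T := by
  have hlin := hsol.dim_le_sixtyFour_mul hd
  have hlog := one_le_log_of_three_le (by lia : 3 ≤ d)
  have hn : 32 ≤ d / 2 := by lia
  let n := d / 2
  let k := 64 * M / n + 1
  let P := ⌊n / (256 * Real.log d * k)⌋₊
  have hkn_upper : k * n ≤ 65 * M := by
    have := Nat.div_mul_le_self (64 * M) n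
    simp only [k, Nat.add_mul]
    lia
  have hkn_lower : 64 * M ≤ k * n := (Nat.lt_mul_div_succ _ (by lia)).le.trans_eq (mul_comm _ _)
  have hk : 64 ≤ k := Nat.le_of_mul_le_mul_right (hkn_lower.trans' (by lia)) (by lia : 0 < n)
  have hscale : 0 < 256 * Real.log d * k := by positivity
  have hP : 256 * Real.log d * (P * k) ≤ n := by
    have := (le_div_iff₀ hscale).1 (Nat.floor_le (by positivity : 0 ≤ n / (256 * Real.log d * k)))
    linarith
  refine ⟨k, P, n, by lia, hkn_upper, (div_lt_iff₀ hscale).1 (Nat.lt_floor_add_one _), ?_⟩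
  rcases P.eq_zero_or_pos with hP0 | hP0
  · rw [hP0]
    lia
  · have hlt := hsol.mul_lt_of_params (m := n / 4) hd hP0 hk hkn_lower hP (by lia) (by lia)
    have hm : n ≤ 8 * (n / 4) := by lia
    calc (P + 1) * n ≤ (2 * P) * (8 * (n / 4)) := Nat.mul_le_mul (by lia) hm
      _ = 16 * (P * (n / 4)) := by ring
      _ ≤ 32 * T := by lia

end SolvesFeasibility

theorem feasibility_query_lower_bound_general {d M T : ℕ} (hd : 64 ≤ d)
    {alg : MemAlg M (EuclideanSpace ℝ (Fin d)) (Option (EuclideanSpace ℝ (Fin d)))}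
    (hsol : SolvesFeasibility d alg T (1 / (48 * (d : ℝ) ^ 2 * √d))) :
    (d : ℝ) ^ 3 ≤ 2 ^ 24 * (M * Real.log d * T) := by
  have hM : d ≤ M := SolvesFeasibility.dim_le_memory hsol
    ((accuracy_le (by lia)).trans (by norm_num)) (two_mul_accuracy_lt (by lia))
  have hlog := one_le_log_of_three_le (by lia : 3 ≤ d)
  obtain ⟨k, P, n, hdn, hkn, hnP, hPn⟩ := SolvesFeasibility.exists_params hsol hd hM
  have hdnR : (d : ℝ) ≤ 3 * n := by exact_mod_cast hdn
  have hknR : (k * n : ℝ) ≤ 65 * M := by exact_mod_cast hkn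
  have hPnR : ((P + 1) * n : ℝ) ≤ 32 * T := by exact_mod_cast hPn
  calc (d : ℝ) ^ 3 ≤ (3 * (n : ℝ)) ^ 3 := by gcongr
    _ = 27 * ((n : ℝ) * n) * n := by ring
    _ ≤ 27 * ((n : ℝ) * n) * ((P + 1) * (256 * Real.log d * k)) := by gcongr
    _ = 27 * 256 * Real.log d * ((k * n) * ((P + 1) * n)) := by ring
    _ ≤ 27 * 256 * Real.log d * ((65 * M) * (32 * T)) := by gcongr
    _ ≤ 2 ^ 24 * (M * Real.log d * T) := by
      have : 0 ≤ M * Real.log d * T := by positivity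
      linarith

theorem mul_le_add_mul_cube {x y : ℝ} (hx : 0 ≤ x) (hy : 1 ≤ y) : x * y ≤ (x + y) * y ^ 3 := by
  gcongr
  · linarith
  · exact le_self_pow₀ hy three_ne_zero

/-- To solve the feasibility problem over the unit ball with accuracy `1/(48 d² √d)`,
any `M`-bit deterministic algorithm (with `M ≥ 1`) must make at least
`Ω(d³ / ((M + log d) (log d)³))` queries. -/
theorem feasibility_query_lower_bound :
    ∃ c : ℝ, 0 < c ∧ ∃ d₀ : ℕ, ∀ d : ℕ, d₀ ≤ d →
      ∀ M T : ℕ, 1 ≤ M →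
        ∀ alg : MemAlg M (EuclideanSpace ℝ (Fin d)) (Option (EuclideanSpace ℝ (Fin d))),
          SolvesFeasibility d alg T (1 / (48 * (d : ℝ) ^ 2 * Real.sqrt d)) →
            c * (d : ℝ) ^ 3 / (((M : ℝ) + Real.log d) * Real.log d ^ 3) ≤ (T : ℝ) := by
  refine ⟨1 / 2 ^ 24, by norm_num, 64, fun d hd M T _ alg hsol => ?_⟩
  have hlog := one_le_log_of_three_le (by lia : 3 ≤ d)
  have hweaker := mul_le_mul_of_nonneg_right (mul_le_add_mul_cube M.cast_nonneg hlog) T.cast_nonneg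
  rw [div_le_iff₀ (by positivity)]
  linarith [feasibility_query_lower_bound_general hd hsol]
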